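/- arXiv:1510.08212 — 4 statements merged into one kernel-verified Lean document; each statement's English description precedes it below -/
import Mathlib

section
/- Every 6-dimensional 2-step nilpotent Lie algebra over K (K = ℝ or ℂ) which is not isomorphic to the direct product h₅ ⊕ K of the 5-dimensional Heisenberg Lie algebra with the 1-dimensional abelian Lie algebra admits a symplectic form. -/
/-- A symplectic form on a Lie algebra `g` over `K`: a `K`-bilinear form which is
alternating, nondegenerate and closed, i.e.
`θ ⁅X,Y⁆ Z + θ ⁅Y,Z⁆ X + θ ⁅Z,X⁆ Y = 0` for all `X Y Z`. -/
def IsSymplecticForm (K : Type*) [RCLike K] (g : Type*) [LieRing g] [LieAlgebra K g]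
    (θ : g → g → K) : Prop :=
  (∀ (a : K) (X Y Z : g), θ (a • X + Y) Z = a * θ X Z + θ Y Z) ∧
  (∀ (a : K) (X Y Z : g), θ X (a • Y + Z) = a * θ X Y + θ X Z) ∧
  (∀ X : g, θ X X = 0) ∧
  (∀ X : g, (∀ Y : g, θ X Y = 0) → X = 0) ∧
  (∀ X Y Z : g, θ ⁅X, Y⁆ Z + θ ⁅Y, Z⁆ X + θ ⁅Z, X⁆ Y = 0)
/-- A Lie algebra is 2-step nilpotent if `[[g,g],g] = 0` and `[g,g] ≠ 0`. -/
def IsTwoStepNilpotent (g : Type*) [LieRing g] : Prop :=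
  (∀ X Y Z : g, ⁅⁅X, Y⁆, Z⁆ = 0) ∧ ∃ X Y : g, ⁅X, Y⁆ ≠ 0
/-- The direct product `h_{2p+1} ⊕ K^m` of the `(2p+1)`-dimensional Heisenberg Lie algebra
(with basis `X_1,…,X_{2p},Z` and nonzero brackets `⁅X_{2i-1}, X_{2i}⁆ = Z`) with the
`m`-dimensional abelian Lie algebra, realized on
`((Fin p → K) × (Fin p → K)) × (K × (Fin m → K))` with bracket
`⁅(a,b,c,d), (a',b',c',d')⁆ = (0, 0, ∑ i, (a i * b' i - a' i * b i), 0)`. -/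
abbrev HeisenbergAbelian (K : Type*) [RCLike K] (p m : ℕ) : Type _ :=
  ((Fin p → K) × (Fin p → K)) × (K × (Fin m → K))

namespace HeisenbergAbelian

variable {K : Type*} [RCLike K] {p m : ℕ}

/-- The Lie bracket of `h_{2p+1} ⊕ K^m`. -/
def brak (x y : HeisenbergAbelian K p m) : HeisenbergAbelian K p m :=
  ((0, 0), (∑ i, (x.1.1 i * y.1.2 i - y.1.1 i * x.1.2 i), 0))

instance (priority := 5000) : LieRing (HeisenbergAbelian K p m) where
  bracket := brak
  add_lie x y z := by
    show brak (x + y) z = brak x z + brak y z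
    simp only [brak, Prod.fst_add, Prod.snd_add, Pi.add_apply, Prod.mk_add_mk, add_zero,
      Prod.mk.injEq, true_and, and_true, ← Finset.sum_add_distrib]
    exact Finset.sum_congr rfl fun i _ => by ring
  lie_add x y z := by
    show brak x (y + z) = brak x y + brak x z
    simp only [brak, Prod.fst_add, Prod.snd_add, Pi.add_apply, Prod.mk_add_mk, add_zero,
      Prod.mk.injEq, true_and, and_true, ← Finset.sum_add_distrib]
    exact Finset.sum_congr rfl fun i _ => by ring
  lie_self x := by
    show brak x x = 0
    simp only [brak, sub_self, Finset.sum_const_zero]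
    rfl
  leibniz_lie x y z := by
    show brak x (brak y z) = brak (brak x y) z + brak y (brak x z)
    simp only [brak, Prod.mk_add_mk, Prod.mk.injEq, Pi.zero_apply, mul_zero, zero_mul,
      sub_self, Finset.sum_const_zero, add_zero, zero_add, and_true, true_and]

instance (priority := 5000) : LieAlgebra K (HeisenbergAbelian K p m) where
  lie_smul t x y := by
    show brak x (t • y) = t • brak x y
    simp only [brak, Prod.smul_fst, Prod.smul_snd, Pi.smul_apply, Prod.smul_mk, smul_zero,
      smul_eq_mul, Prod.mk.injEq, true_and, and_true, Finset.mul_sum]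
    exact Finset.sum_congr rfl fun i _ => by ring

end HeisenbergAbelian

/-!
A Lie algebra `g` with `⁅⁅g, g⁆, g⁆ = 0` is a central extension of a vector space `E` by
`W = ⁅g, g⁆`, given by an alternating map `β : E × E → W` whose values span `W`. An injective
`φ : W → E*` with `φ (β x y) z + φ (β y z) x + φ (β z x) y = 0` yields a closed alternating form on
`E × W` pairing the two factors; its radical is the annihilator of the range of `φ` in `E`, and
adding a nondegenerate form there makes it symplectic.

In dimension 6 such a `φ` is found according to `(dim E, dim W)`, which is `(6, 0)`, `(5, 1)`,
`(4, 2)` or `(3, 3)`; the first case is trivial.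
* `(5, 1)`: `β` is a form of rank 2 or 4. Rank 2 means `β = f ∧ h`, and `φ = f` works; rank 4 is
  `h₅ ⊕ K`.
* `(4, 2)`: the solutions `φ` form a space of dimension at least `8 - 4 = 4`. If none were
  injective, all would have rank at most 1, so they would be all the `ℓ ⊗ a`, `a ∈ E*`, for one
  nonzero `ℓ ∈ W*`. This forces `ℓ ∘ β = 0`, contradicting that `β` spans.
* `(3, 3)`: `β` is universal, and `φ (β bᵢ bᵢ₊₁) = bᵢ*` for a basis `b` of `E` works.
-/

open Module Submodule

section RankOne

variable {K V D : Type*} [Field K] [AddCommGroup V] [Module K V] [AddCommGroup D] [Module K D]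

theorem exists_eq_smulRight_of_finrank_range_le_one [FiniteDimensional K V] {f : V →ₗ[K] D}
    (hf : finrank K f.range ≤ 1) : ∃ (ℓ : Dual K V) (a : D), f = ℓ.smulRight a := by
  obtain ⟨a, ha⟩ := finrank_le_one_iff.mp hf
  choose c hc using fun x => ha ⟨f x, f.mem_range_self x⟩
  have hca (x : V) : c x • (a : D) = f x := congrArg Subtype.val (hc x)
  obtain ha0 | ha0 := eq_or_ne (a : D) 0
  · exact ⟨0, 0, LinearMap.ext fun x => by simp [← hca x, ha0]⟩
  · obtain ⟨h, hh⟩ := Projective.exists_dual_eq_one K ha0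
    exact ⟨h ∘ₗ f, a, LinearMap.ext fun x => by simp [← hca x, hh]⟩

theorem smulRight_mem_range_or_mem_range {ℓ₀ ℓ m : Dual K V} {a₀ a b : D} (hℓ₀ : ℓ₀ ≠ 0)
    (ha₀ : a₀ ≠ 0) (h : ℓ₀.smulRight a₀ + ℓ.smulRight a = m.smulRight b) :
    ℓ.smulRight a ∈ (LinearMap.smulRightₗ (M := D) ℓ₀).range ∨
      ℓ.smulRight a ∈ ((LinearMap.smulRightₗ (M := D) (M₂ := V)).flip a₀).range := by
  have h' (x : V) : ℓ₀ x • a₀ + ℓ x • a = m x • b := LinearMap.congr_fun h x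
  by_cases ha : a ∈ K ∙ a₀
  · obtain ⟨c, rfl⟩ := mem_span_singleton.mp ha
    exact Or.inr ⟨c • ℓ, LinearMap.ext fun x => by simp [smul_comm c]⟩
  left
  obtain ⟨f, hfa, hf⟩ := exists_le_ker_of_notMem ha
  have hfa₀ : f a₀ = 0 := hf (mem_span_singleton_self a₀)
  have hℓm (x : V) : ℓ x * f a = m x * f b := by simpa [hfa₀] using congrArg f (h' x)
  obtain ⟨g, hg⟩ := Projective.exists_dual_eq_one K ha₀
  obtain ⟨c, hℓ₀ℓ⟩ : ∃ c, ∀ x, ℓ₀ x * f b = ℓ x * c := by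
    refine ⟨f a * g b - f b * g a, fun x => ?_⟩
    have hgx : ℓ₀ x + ℓ x * g a = m x * g b := by simpa [hg] using congrArg g (h' x)
    linear_combination f b * hgx - g b * hℓm x
  obtain hfb | hfb := eq_or_ne (f b) 0
  · have hℓ : ℓ = 0 := LinearMap.ext fun x => by simpa [hfb, hfa] using hℓm x
    exact ⟨0, by simp [hℓ]⟩
  have hc : c ≠ 0 := by
    rintro rfl
    exact hℓ₀ (LinearMap.ext fun x => by simpa [hfb] using hℓ₀ℓ x)
  refine ⟨(f b / c) • a, LinearMap.ext fun x => ?_⟩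
  have hℓx : ℓ x = ℓ₀ x * (f b / c) := by
    rw [mul_div_assoc', hℓ₀ℓ x, mul_div_cancel_right₀ _ hc]
  simp [hℓx, mul_smul, smul_comm (ℓ₀ x)]

theorem le_range_smulRight_or_le_range_smulRight_flip [FiniteDimensional K V]
    {L : Submodule K (V →ₗ[K] D)} (hL : ∀ f ∈ L, finrank K f.range ≤ 1) :
    (∃ ℓ : Dual K V, L ≤ (LinearMap.smulRightₗ (M := D) ℓ).range) ∨
      ∃ a : D, L ≤ ((LinearMap.smulRightₗ (M := D) (M₂ := V)).flip a).range := by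
  obtain rfl | hne := eq_or_ne L ⊥
  · exact Or.inl ⟨0, bot_le⟩
  obtain ⟨f₀, hf₀L, hf₀⟩ := L.exists_mem_ne_zero_of_ne_bot hne
  obtain ⟨ℓ₀, a₀, rfl⟩ := exists_eq_smulRight_of_finrank_range_le_one (hL f₀ hf₀L)
  have hℓ₀ : ℓ₀ ≠ 0 := by rintro rfl; exact hf₀ (by ext; simp)
  have ha₀ : a₀ ≠ 0 := by rintro rfl; exact hf₀ (by ext; simp)
  have hunion : ∀ f ∈ L, f ∈ (LinearMap.smulRightₗ (M := D) ℓ₀).range ∨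
      f ∈ ((LinearMap.smulRightₗ (M := D) (M₂ := V)).flip a₀).range := by
    intro f hf
    obtain ⟨ℓ, a, rfl⟩ := exists_eq_smulRight_of_finrank_range_le_one (hL f hf)
    obtain ⟨m, b, hmb⟩ :=
      exists_eq_smulRight_of_finrank_range_le_one (hL _ (L.add_mem hf₀L hf))
    exact smulRight_mem_range_or_mem_range hℓ₀ ha₀ hmb
  exact (AddSubgroupClass.subset_union.mp hunion).imp (⟨ℓ₀, ·⟩) (⟨a₀, ·⟩)

theorem exists_forall_smulRight_mem [FiniteDimensional K V] [FiniteDimensional K D]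
    {L : Submodule K (V →ₗ[K] D)} (hL : ∀ f ∈ L, finrank K f.range ≤ 1)
    (hVD : finrank K V < finrank K D) (hDL : finrank K D ≤ finrank K L) :
    ∃ ℓ : Dual K V, ℓ ≠ 0 ∧ ∀ a : D, ℓ.smulRight a ∈ L := by
  obtain ⟨ℓ, hℓ⟩ | ⟨a, ha⟩ := le_range_smulRight_or_le_range_smulRight_flip hL
  · have hLeq : L = (LinearMap.smulRightₗ (M := D) ℓ).range :=
      eq_of_le_of_finrank_le hℓ ((LinearMap.finrank_range_le _).trans hDL)
    refine ⟨ℓ, ?_, fun a => hLeq ▸ ⟨a, rfl⟩⟩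
    rintro rfl
    rw [hLeq, map_zero, LinearMap.range_zero, finrank_bot] at hDL
    omega
  · have := (finrank_mono ha).trans (LinearMap.finrank_range_le _)
    rw [Subspace.dual_finrank_eq] at this
    omega

end RankOne

section AlternatingBilinear

section CommRing

variable {R E W : Type*} [CommRing R] [AddCommGroup E] [Module R E] [AddCommGroup W] [Module R W]
  {β : E →ₗ[R] E →ₗ[R] W}

/-- An alternating bilinear map, as an alternating map in two variables. -/
def alternatingMapOfIsAlt (β : E →ₗ[R] E →ₗ[R] W) (hβ : β.IsAlt) : E [⋀^Fin 2]→ₗ[R] W where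
  toFun v := β (v 0) (v 1)
  map_update_add' v i x y := by fin_cases i <;> simp
  map_update_smul' v i c x := by fin_cases i <;> simp
  map_eq_zero_of_eq' v i j hv hij := by
    have h01 : v 0 = v 1 := by fin_cases i <;> fin_cases j <;> simp_all
    rw [h01, hβ.self_eq_zero]

/-- For `φ : W → E*`, the alternating trilinear form
`φ (β x y) z + φ (β y z) x + φ (β z x) y`, whose vanishing is the closedness condition for the
alternating form on the central extension of `E` by `W` that pairs the two factors through `φ`. -/
def cyclicSum (β : E →ₗ[R] E →ₗ[R] W) (hβ : β.IsAlt) :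
    (W →ₗ[R] Dual R E) →ₗ[R] E [⋀^Fin 3]→ₗ[R] R :=
  AlternatingMap.alternatizeUncurryFinLM ∘ₗ
    { toFun φ :=
        { toFun x := (φ.flip x).compAlternatingMap (alternatingMapOfIsAlt β hβ)
          map_add' x y := by ext; simp
          map_smul' c x := by ext; simp }
      map_add' φ ψ := by ext; simp
      map_smul' c φ := by ext; simp }

theorem cyclicSum_apply (hβ : β.IsAlt) (φ : W →ₗ[R] Dual R E) (v : Fin 3 → E) :
    cyclicSum β hβ φ v =
      φ (β (v 0) (v 1)) (v 2) + φ (β (v 1) (v 2)) (v 0) + φ (β (v 2) (v 0)) (v 1) := by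
  have hexpand : cyclicSum β hβ φ v =
      φ (β (v 1) (v 2)) (v 0) - φ (β (v 0) (v 2)) (v 1) + φ (β (v 0) (v 1)) (v 2) := by
    simp [cyclicSum, AlternatingMap.alternatizeUncurryFin_apply, Fin.sum_univ_three,
      alternatingMapOfIsAlt, Fin.removeNth, Fin.succAbove, sub_eq_add_neg]
  rw [hexpand, ← hβ.neg (v 2) (v 0), map_neg, LinearMap.neg_apply]
  ring

end CommRing

variable {K E W : Type*} [Field K] [AddCommGroup E] [Module K E] [AddCommGroup W] [Module K W]
  {β : E →ₗ[K] E →ₗ[K] W}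

theorem finrank_alternatingMap [FiniteDimensional K E] (n : ℕ) :
    finrank K (E [⋀^Fin n]→ₗ[K] K) = (finrank K E).choose n := by
  rw [exteriorPower.alternatingMapLinearEquiv.finrank_eq, Subspace.dual_finrank_eq,
    exteriorPower.finrank_eq]

theorem finrank_le_choose_two_of_map₂_eq_top [FiniteDimensional K E] (hβ : β.IsAlt)
    (hspan : map₂ β ⊤ ⊤ = ⊤) : finrank K W ≤ (finrank K E).choose 2 := by
  rw [← exteriorPower.finrank_eq K]
  refine LinearMap.finrank_le_finrank_of_surjective (f :=
    exteriorPower.alternatingMapLinearEquiv (alternatingMapOfIsAlt β hβ)) ?_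
  rw [← LinearMap.range_eq_top, eq_top_iff, ← hspan, map₂_le]
  exact fun x _ y _ => ⟨exteriorPower.ιMulti K 2 ![x, y], by
    rw [exteriorPower.alternatingMapLinearEquiv_apply_ιMulti]; rfl⟩

end AlternatingBilinear

section Darboux

section CommRing

variable {R E : Type*} [CommRing R] [AddCommGroup E] [Module R E]

/-- The standard alternating form of rank `2p`, on `R^p × R^p`. -/
def stdAlternatingForm (R : Type*) [CommRing R] (p : ℕ) :
    LinearMap.BilinForm R ((Fin p → R) × (Fin p → R)) :=
  LinearMap.mk₂ R (fun x y => ∑ i, (x.1 i * y.2 i - y.1 i * x.2 i))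
    (fun _ _ _ => by
      simp only [Prod.fst_add, Prod.snd_add, Pi.add_apply, ← Finset.sum_add_distrib]
      exact Finset.sum_congr rfl fun _ _ => by ring)
    (fun _ _ _ => by
      simp only [Prod.smul_fst, Prod.smul_snd, Pi.smul_apply, smul_eq_mul, Finset.mul_sum]
      exact Finset.sum_congr rfl fun _ _ => by ring)
    (fun _ _ _ => by
      simp only [Prod.fst_add, Prod.snd_add, Pi.add_apply, ← Finset.sum_add_distrib]
      exact Finset.sum_congr rfl fun _ _ => by ring)
    (fun _ _ _ => by
      simp only [Prod.smul_fst, Prod.smul_snd, Pi.smul_apply, smul_eq_mul, Finset.mul_sum]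
      exact Finset.sum_congr rfl fun _ _ => by ring)

theorem stdAlternatingForm_apply {p : ℕ} (x y : (Fin p → R) × (Fin p → R)) :
    stdAlternatingForm R p x y = ∑ i, (x.1 i * y.2 i - y.1 i * x.2 i) :=
  rfl

theorem stdAlternatingForm_isAlt (p : ℕ) : (stdAlternatingForm R p).IsAlt := fun x => by
  simp [stdAlternatingForm_apply]

theorem stdAlternatingForm_separatingLeft (p : ℕ) :
    (stdAlternatingForm R p).SeparatingLeft := by
  intro x hx
  ext i
  · simpa [stdAlternatingForm_apply, Pi.single_apply] using hx (0, Pi.single i 1)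
  · simpa [stdAlternatingForm_apply, Pi.single_apply] using hx (Pi.single i 1, 0)

theorem exists_equiv_prod_of_isAlt {γ : LinearMap.BilinForm R E} (hγ : γ.IsAlt) {u v : E}
    (huv : γ u v = 1) :
    ∃ (N : Submodule R E) (e : ((R × R) × N) ≃ₗ[R] E), ∀ x y,
      γ (e x) (e y) = x.1.1 * y.1.2 - y.1.1 * x.1.2 + γ x.2 y.2 := by
  have hvu : γ v u = -1 := by rw [← LinearMap.IsAlt.neg hγ u v, huv]
  let N : Submodule R E := (γ u).ker ⊓ (γ v).ker
  let f : (R × R) × N →ₗ[R] E := ((LinearMap.toSpanSingleton R E u).coprod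
    (LinearMap.toSpanSingleton R E v)).coprod N.subtype
  have hf (x) : f x = x.1.1 • u + x.1.2 • v + x.2 := by simp [f]
  have hu (n : N) : γ u n = 0 := n.2.1
  have hv (n : N) : γ v n = 0 := n.2.2
  have hinj : Function.Injective f := by
    rw [injective_iff_map_eq_zero]
    rintro ⟨⟨s, t⟩, n⟩ h
    rw [hf] at h
    have ht : t = 0 := by simpa [hγ.self_eq_zero, huv, hu] using congrArg (γ u) h
    have hs : s = 0 := by simpa [hγ.self_eq_zero, hvu, hv] using congrArg (γ v) h
    simpa [hs, ht] using h
  have hsurj : Function.Surjective f := by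
    intro x
    refine ⟨((-γ v x, γ u x), ⟨x + γ v x • u - γ u x • v, ?_, ?_⟩), ?_⟩
    · simp [hγ.self_eq_zero, huv]
    · simp [hγ.self_eq_zero, hvu]
    · rw [hf]; module
  have hbij : Function.Bijective f := ⟨hinj, hsurj⟩
  refine ⟨N, LinearEquiv.ofBijective f hbij, fun x y => ?_⟩
  have hu' (n : N) : γ n u = 0 := hγ.isRefl _ _ (hu n)
  have hv' (n : N) : γ n v = 0 := hγ.isRefl _ _ (hv n)
  simp only [LinearEquiv.ofBijective_apply, hf, map_add, map_smul, LinearMap.add_apply,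
    LinearMap.smul_apply, smul_eq_mul, hγ.self_eq_zero, huv, hvu, hu, hv, hu', hv']
  ring

end CommRing

variable {K E : Type*} [Field K] [AddCommGroup E] [Module K E] [FiniteDimensional K E]

theorem exists_isAlt_separatingLeft (h : Even (finrank K E)) :
    ∃ ω : LinearMap.BilinForm K E, ω.IsAlt ∧ ω.SeparatingLeft := by
  obtain ⟨p, hp⟩ := h
  let e : E ≃ₗ[K] (Fin p → K) × (Fin p → K) := LinearEquiv.ofFinrankEq _ _ (by simp [hp])
  refine ⟨(stdAlternatingForm K p).compl₁₂ e.toLinearMap e.toLinearMap,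
    fun x => stdAlternatingForm_isAlt p (e x), fun x hx => ?_⟩
  rw [← e.map_eq_zero_iff]
  exact stdAlternatingForm_separatingLeft p _ fun y => by simpa using hx (e.symm y)

theorem exists_equiv_stdAlternatingForm {γ : LinearMap.BilinForm K E}
    (hγ : γ.IsAlt) :
    ∃ (p m : ℕ) (e : (((Fin p → K) × (Fin p → K)) × (Fin m → K)) ≃ₗ[K] E), ∀ x y,
      γ (e x) (e y) = stdAlternatingForm K p x.1 y.1 := by
  induction h : finrank K E using Nat.strong_induction_on generalizing E with
  | _ n ih =>
    obtain rfl | hγ0 := eq_or_ne γ 0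
    · exact ⟨0, finrank K E, LinearEquiv.ofFinrankEq _ _ (by simp), fun x y => by
        simp [stdAlternatingForm_apply]⟩
    obtain ⟨u, hu⟩ := DFunLike.ne_iff.mp hγ0
    obtain ⟨v, huv⟩ := LinearMap.surjective hu 1
    obtain ⟨N, e, he⟩ := exists_equiv_prod_of_isAlt hγ huv
    have hfin : finrank K N < n := by
      have := e.finrank_eq
      simp only [finrank_prod, finrank_self] at this
      omega
    obtain ⟨p, m, e', he'⟩ := ih _ hfin (γ := γ.compl₁₂ N.subtype N.subtype)
      (fun x => hγ.self_eq_zero _) rfl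
    let cons : (K × (Fin p → K)) ≃ₗ[K] (Fin (p + 1) → K) := Fin.consLinearEquiv K fun _ => K
    let split : (((Fin (p + 1) → K) × (Fin (p + 1) → K)) × (Fin m → K)) ≃ₗ[K]
        (K × K) × (((Fin p → K) × (Fin p → K)) × (Fin m → K)) :=
      LinearEquiv.prodCongr ((LinearEquiv.prodCongr cons cons).symm ≪≫ₗ
        LinearEquiv.prodProdProdComm K _ _ _ _) (.refl K _) ≪≫ₗ LinearEquiv.prodAssoc K _ _ _
    refine ⟨p + 1, m, split ≪≫ₗ LinearEquiv.prodCongr (.refl K _) e' ≪≫ₗ e, fun x y => ?_⟩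
    have hγN (x y) : γ (e' x) (e' y) = stdAlternatingForm K p x.1 y.1 := he' x y
    rw [stdAlternatingForm_apply, Fin.sum_univ_succ]
    exact (he _ _).trans (congrArg _ (hγN _ _))

end Darboux

section ClosedPairing

variable {K E W : Type*} [Field K] [AddCommGroup E] [Module K E]
  [AddCommGroup W] [Module K W] {β : E →ₗ[K] E →ₗ[K] W}

theorem exists_injective_cyclicSum_eq_zero_of_finrank_eq_three (hβ : β.IsAlt)
    (hspan : map₂ β ⊤ ⊤ = ⊤) (hE : finrank K E = 3) (hW : finrank K W = 3) :
    ∃ φ : W →ₗ[K] Dual K E, Function.Injective φ ∧ cyclicSum β hβ φ = 0 := by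
  have : FiniteDimensional K E := .of_finrank_pos (by omega)
  let b : Basis (Fin 3) K E := finBasisOfFinrankEq K E hE
  let v (i : Fin 3) : W := β (b (i + 1)) (b (i + 2))
  have hβv (i : Fin 3) : β (b i) (b (i + 1)) = v (i + 2) := by
    fin_cases i <;> rfl
  have hv : ⊤ ≤ span K (Set.range v) := by
    rw [← hspan, ← b.span_eq, map₂_span_span, span_le]
    rintro _ ⟨_, ⟨i, rfl⟩, _, ⟨j, rfl⟩, rfl⟩
    obtain rfl | rfl | rfl : i = j ∨ j = i + 1 ∨ i = j + 1 := by decide +revert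
    · simp [hβ.self_eq_zero]
    · exact subset_span ⟨i + 2, (hβv i).symm⟩
    · change β (b (j + 1)) (b j) ∈ span K (Set.range v)
      rw [← hβ.neg, hβv]
      exact neg_mem (subset_span ⟨_, rfl⟩)
  let w : Basis (Fin 3) K W := basisOfTopLeSpanOfCardEqFinrank v hv (by simp [hW])
  let φ : W ≃ₗ[K] Dual K E := w.equiv b.dualBasis (Equiv.addRight 1)
  have hφ (i : Fin 3) : φ (v i) = b.coord (i + 1) := by
    have hwv : w i = v i := by simp [w]
    rw [← hwv, Basis.equiv_apply, Basis.coe_dualBasis, Equiv.coe_addRight]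
  refine ⟨φ, φ.injective, ?_⟩
  have hval : cyclicSum β hβ φ b = 0 := by
    simp only [cyclicSum_apply, LinearEquiv.coe_coe]
    rw [show β (b 0) (b 1) = v 2 from rfl, show β (b 1) (b 2) = v 0 from rfl,
      show β (b 2) (b 0) = v 1 from rfl]
    simp [hφ]
  rw [(cyclicSum β hβ φ).eq_smul_basis_det b, hval, zero_smul]

theorem eq_zero_of_forall_cyclicSum_smulRight_eq_zero (hβ : β.IsAlt)
    (hspan : map₂ β ⊤ ⊤ = ⊤) (hE : 3 ≤ finrank K E) {ℓ : Dual K W}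
    (hℓ : ∀ a : Dual K E, cyclicSum β hβ (ℓ.smulRight a) = 0) : ℓ = 0 := by
  rw [← LinearMap.ker_eq_top, eq_top_iff, ← hspan, map₂_le]
  intro x _ y _
  obtain ⟨z, hz⟩ : ∃ z, z ∉ span K (Set.range ![x, y]) := by
    by_contra! h
    have := finrank_range_le_card (R := K) ![x, y]
    rw [Set.finrank, eq_top_iff'.mpr h, finrank_top, Fintype.card_fin] at this
    omega
  obtain ⟨a, haz, ha⟩ := exists_le_ker_of_notMem hz
  have hax : a x = 0 := ha (subset_span ⟨0, rfl⟩)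
  have hay : a y = 0 := ha (subset_span ⟨1, rfl⟩)
  simpa [cyclicSum_apply, hax, hay, haz] using DFunLike.congr_fun (hℓ a) ![x, y, z]

theorem exists_injective_cyclicSum_eq_zero_of_finrank_eq_four (hβ : β.IsAlt)
    (hspan : map₂ β ⊤ ⊤ = ⊤) (hE : finrank K E = 4) (hW : finrank K W = 2) :
    ∃ φ : W →ₗ[K] Dual K E, Function.Injective φ ∧ cyclicSum β hβ φ = 0 := by
  have : FiniteDimensional K E := .of_finrank_pos (by omega)
  have : FiniteDimensional K W := .of_finrank_pos (by omega)
  by_contra! hinj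
  have hrank : ∀ φ ∈ (cyclicSum β hβ).ker, finrank K φ.range ≤ 1 := by
    intro φ hφ
    have hker : φ.ker ≠ ⊥ := fun h => hinj φ (LinearMap.ker_eq_bot.mp h) hφ
    have := φ.finrank_range_add_finrank_ker
    have := one_le_finrank_iff.mpr hker
    omega
  have hker : 4 ≤ finrank K (cyclicSum β hβ).ker := by
    have hforms : finrank K (E [⋀^Fin 3]→ₗ[K] K) = 4 := by rw [finrank_alternatingMap, hE]; rfl
    have : FiniteDimensional K (E [⋀^Fin 3]→ₗ[K] K) := .of_finrank_pos (by omega)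
    have hrange := (cyclicSum β hβ).range.finrank_le
    have hadd := LinearMap.finrank_range_add_finrank_ker (V := W →ₗ[K] Dual K E)
      (V₂ := E [⋀^Fin 3]→ₗ[K] K) (cyclicSum β hβ)
    rw [finrank_linearMap, Subspace.dual_finrank_eq, hE, hW] at hadd
    omega
  obtain ⟨ℓ, hℓ0, hℓ⟩ := exists_forall_smulRight_mem hrank
    (by rw [Subspace.dual_finrank_eq]; omega) (by rwa [Subspace.dual_finrank_eq, hE])
  exact hℓ0 (eq_zero_of_forall_cyclicSum_smulRight_eq_zero hβ hspan (by omega) hℓ)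

theorem exists_injective_cyclicSum_eq_zero_of_apply_eq_mul_sub_mul (hβ : β.IsAlt)
    (κ : W ≃ₗ[K] K) {f h : Dual K E} (hf : f ≠ 0)
    (hκ : ∀ x y, κ (β x y) = f x * h y - f y * h x) :
    ∃ φ : W →ₗ[K] Dual K E, Function.Injective φ ∧ cyclicSum β hβ φ = 0 := by
  refine ⟨κ.toLinearMap.smulRight f, fun w z hwz => κ.injective (smul_left_injective K hf ?_), ?_⟩
  · simpa using hwz
  · ext v
    simp only [cyclicSum_apply, LinearMap.smulRight_apply, LinearEquiv.coe_coe, hκ,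
      LinearMap.smul_apply, smul_eq_mul, AlternatingMap.zero_apply]
    ring

theorem exists_injective_cyclicSum_eq_zero_or_equiv_of_finrank_eq_five (hβ : β.IsAlt)
    (hspan : map₂ β ⊤ ⊤ = ⊤) (hE : finrank K E = 5) (hW : finrank K W = 1) :
    (∃ φ : W →ₗ[K] Dual K E, Function.Injective φ ∧ cyclicSum β hβ φ = 0) ∨
      ∃ (κ : W ≃ₗ[K] K) (e : (((Fin 2 → K) × (Fin 2 → K)) × (Fin 1 → K)) ≃ₗ[K] E),
        ∀ x y, κ (β (e x) (e y)) = stdAlternatingForm K 2 x.1 y.1 := by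
  have : FiniteDimensional K E := .of_finrank_pos (by omega)
  have : FiniteDimensional K W := .of_finrank_pos (by omega)
  let κ : W ≃ₗ[K] K := LinearEquiv.ofFinrankEq _ _ (by rw [hW, finrank_self])
  obtain ⟨p, m, e, he⟩ := exists_equiv_stdAlternatingForm (γ := β.compr₂ κ.toLinearMap)
    fun x => by simp [hβ.self_eq_zero]
  have hκ (x y) : κ (β (e x) (e y)) = stdAlternatingForm K p x.1 y.1 := he x y
  have hpm : p + p + m = 5 := by
    simpa [hE] using e.finrank_eq
  obtain rfl | rfl | rfl : p = 0 ∨ p = 1 ∨ p = 2 := by omega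
  · have hβ0 : β = 0 := LinearMap.ext₂ fun x y => by
      simpa [stdAlternatingForm_apply] using hκ (e.symm x) (e.symm y)
    have htop : (⊤ : Submodule K W) = ⊥ := by
      rw [← hspan, eq_bot_iff, map₂_le]
      simp [hβ0]
    rw [← finrank_top K W, htop, finrank_bot] at hW
    omega
  · refine .inl (exists_injective_cyclicSum_eq_zero_of_apply_eq_mul_sub_mul hβ κ
      (f := LinearMap.proj 0 ∘ₗ LinearMap.fst K _ _ ∘ₗ LinearMap.fst K _ _ ∘ₗ e.symm.toLinearMap)
      (h := LinearMap.proj 0 ∘ₗ LinearMap.snd K _ _ ∘ₗ LinearMap.fst K _ _ ∘ₗ e.symm.toLinearMap)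
      (fun h => ?_) fun x y => ?_)
    · simpa using LinearMap.congr_fun h (e ((1, 0), 0))
    · simpa [stdAlternatingForm_apply] using hκ (e.symm x) (e.symm y)
  · obtain rfl : m = 1 := by omega
    exact .inr ⟨κ, e, hκ⟩

theorem exists_separatingLeft_of_injective_of_cyclicSum_eq_zero [FiniteDimensional K E]
    {φ : W →ₗ[K] Dual K E} (hβ : β.IsAlt) (hφ : Function.Injective φ)
    (hclosed : cyclicSum β hβ φ = 0) (hdim : Even (finrank K E + finrank K W)) :
    ∃ θ : LinearMap.BilinForm K (E × W), θ.IsAlt ∧ θ.SeparatingLeft ∧ ∀ x y z,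
      θ (0, β x.1 y.1) z + θ (0, β y.1 z.1) x + θ (0, β z.1 x.1) y = 0 := by
  let U : Submodule K E := φ.range.dualCoannihilator
  have hU (u : U) (w : W) : φ w u = 0 :=
    (mem_dualCoannihilator _).mp u.2 _ ⟨w, rfl⟩
  have hUdim : Even (finrank K U) := by
    have h : finrank K φ.range + finrank K U = finrank K E :=
      Subspace.finrank_add_finrank_dualCoannihilator_eq φ.range
    rw [LinearMap.finrank_range_of_inj hφ] at h
    obtain ⟨n, hn⟩ := hdim
    exact ⟨n - finrank K W, by omega⟩
  obtain ⟨ω, hωalt, hωsep⟩ := exists_isAlt_separatingLeft hUdim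
  obtain ⟨π, hπ⟩ := U.subtype.exists_leftInverse_of_injective U.ker_subtype
  have hπU (u : U) : π u = u := LinearMap.congr_fun hπ u
  let pairing : LinearMap.BilinForm K (E × W) :=
    φ.compl₁₂ (LinearMap.snd K E W) (LinearMap.fst K E W)
  let θ : LinearMap.BilinForm K (E × W) := pairing - pairing.flip +
    ω.compl₁₂ (π ∘ₗ LinearMap.fst K E W) (π ∘ₗ LinearMap.fst K E W)
  have hθ (x y) : θ x y = φ x.2 y.1 - φ y.2 x.1 + ω (π x.1) (π y.1) := rfl
  refine ⟨θ, fun x => by simp [hθ, hωalt.self_eq_zero], ?_, fun x y z => ?_⟩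
  · rintro ⟨x, w⟩ hxw
    have hx : x ∈ U := (mem_dualCoannihilator _).mpr <| by
      rintro _ ⟨z, rfl⟩
      simpa [hθ] using hxw (0, z)
    obtain rfl : x = 0 := congrArg Subtype.val <| hωsep ⟨x, hx⟩ fun u => by
      simpa [hθ, hU, hπU, hπU ⟨x, hx⟩] using hxw (u, 0)
    have hw : φ w = 0 := LinearMap.ext fun y => by simpa [hθ] using hxw (y, 0)
    rw [(map_eq_zero_iff φ hφ).mp hw, Prod.mk_zero_zero]
  · simpa [hθ, cyclicSum_apply] using DFunLike.congr_fun hclosed ![x.1, y.1, z.1]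

end ClosedPairing

section CentralExtension

/-- The linear identification `e` turns the Lie algebra `g` into the central extension of the
vector space `E` by `W` with bracket `⁅(x, w), (y, z)⁆ = (0, β x y)`. -/
def IsCentralExtension {R g E W : Type*} [CommRing R] [LieRing g] [LieAlgebra R g]
    [AddCommGroup E] [Module R E] [AddCommGroup W] [Module R W]
    (β : E →ₗ[R] E →ₗ[R] W) (e : g ≃ₗ[R] E × W) : Prop :=
  ∀ X Y, e ⁅X, Y⁆ = (0, β (e X).1 (e Y).1)

/-- Symplectic forms on Lie algebras over an arbitrary commutative ring, as bilinear forms. -/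
def IsSymplecticBilinForm {R g : Type*} [CommRing R] [LieRing g] [LieAlgebra R g]
    (θ : LinearMap.BilinForm R g) : Prop :=
  θ.IsAlt ∧ θ.SeparatingLeft ∧ ∀ X Y Z, θ ⁅X, Y⁆ Z + θ ⁅Y, Z⁆ X + θ ⁅Z, X⁆ Y = 0

theorem IsSymplecticBilinForm.isSymplecticForm {K g : Type*} [RCLike K] [LieRing g]
    [LieAlgebra K g] {θ : LinearMap.BilinForm K g} (hθ : IsSymplecticBilinForm θ) :
    IsSymplecticForm K g fun X Y => θ X Y :=
  ⟨by simp, by simp, hθ.1, hθ.2.1, hθ.2.2⟩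

section Field

variable {K g E W : Type*} [Field K] [LieRing g] [LieAlgebra K g] [AddCommGroup E] [Module K E]
  [AddCommGroup W] [Module K W] {β : E →ₗ[K] E →ₗ[K] W} {e : g ≃ₗ[K] E × W}

theorem exists_isCentralExtension (hg : ∀ X Y Z : g, ⁅⁅X, Y⁆, Z⁆ = 0) :
    ∃ (E W : Submodule K g) (β : E →ₗ[K] E →ₗ[K] W) (e : g ≃ₗ[K] E × W),
      β.IsAlt ∧ map₂ β ⊤ ⊤ = ⊤ ∧ IsCentralExtension β e := by
  let L : g →ₗ[K] g →ₗ[K] g := (LieModule.toEnd K g g : g →ₗ[K] End K g)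
  let W : Submodule K g := map₂ L ⊤ ⊤
  have hLW (X Y : g) : ⁅X, Y⁆ ∈ W := apply_mem_map₂ L mem_top mem_top
  have hWlie (w : W) (Y : g) : ⁅(w : g), Y⁆ = 0 := by
    have hW : W ≤ (L.flip Y).ker := map₂_le.mpr fun X _ Z _ => hg X Z Y
    exact hW w.2
  have hlieW (w : W) (Y : g) : ⁅Y, (w : g)⁆ = 0 := by rw [← lie_skew, hWlie, neg_zero]
  obtain ⟨E, hEW⟩ := Submodule.exists_isCompl W
  let e : g ≃ₗ[K] E × W := (prodEquivOfIsCompl E W hEW.symm).symm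
  let β : E →ₗ[K] E →ₗ[K] W := LinearMap.mk₂ K (fun x y => ⟨⁅(x : g), (y : g)⁆, hLW x y⟩)
    (fun _ _ _ => Subtype.ext (add_lie ..)) (fun _ _ _ => Subtype.ext (smul_lie ..))
    (fun _ _ _ => Subtype.ext (lie_add ..)) (fun _ _ _ => Subtype.ext (lie_smul ..))
  have hlie (X Y : g) : ⁅X, Y⁆ = β (e X).1 (e Y).1 := by
    obtain ⟨⟨x, w⟩, rfl⟩ := e.symm.surjective X
    obtain ⟨⟨y, z⟩, rfl⟩ := e.symm.surjective Y
    simp [e, β, hWlie, hlieW]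
  refine ⟨E, W, β, e, fun x => Subtype.ext (lie_self (x : g)), ?_, fun X Y => ?_⟩
  · have hW : W ≤ (map₂ β ⊤ ⊤).map W.subtype := map₂_le.mpr fun X _ Y _ =>
      ⟨_, apply_mem_map₂ β mem_top mem_top, (hlie X Y).symm⟩
    refine eq_top_iff.mpr fun w _ => ?_
    obtain ⟨v, hv, hvw⟩ := hW w.2
    rwa [← Subtype.ext hvw]
  · rw [hlie, ← e.eq_symm_apply]
    simp [e]

theorem IsCentralExtension.exists_isSymplecticBilinForm [FiniteDimensional K g]
    (he : IsCentralExtension β e) (hβ : β.IsAlt) {φ : W →ₗ[K] Dual K E}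
    (hφ : Function.Injective φ) (hclosed : cyclicSum β hβ φ = 0) (hdim : Even (finrank K g)) :
    ∃ θ : LinearMap.BilinForm K g, IsSymplecticBilinForm θ := by
  have : FiniteDimensional K (E × W) := e.finiteDimensional
  have : FiniteDimensional K E := .of_surjective (LinearMap.fst K E W) LinearMap.fst_surjective
  have : FiniteDimensional K W := .of_surjective (LinearMap.snd K E W) LinearMap.snd_surjective
  rw [e.finrank_eq, finrank_prod] at hdim
  obtain ⟨θ, halt, hsep, hθ⟩ :=
    exists_separatingLeft_of_injective_of_cyclicSum_eq_zero hβ hφ hclosed hdim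
  refine ⟨θ.compl₁₂ e.toLinearMap e.toLinearMap, fun X => halt (e X), fun X hX => ?_,
    fun X Y Z => ?_⟩
  · exact e.map_eq_zero_iff.mp (hsep _ fun y => by simpa using hX (e.symm y))
  · simpa [he X Y, he Y Z, he Z X] using hθ (e X) (e Y) (e Z)

theorem IsCentralExtension.exists_stdAlternatingForm {p m : ℕ} (he : IsCentralExtension β e)
    (κ : W ≃ₗ[K] K) (f : (((Fin p → K) × (Fin p → K)) × (Fin m → K)) ≃ₗ[K] E)
    (hκ : ∀ x y, κ (β (f x) (f y)) = stdAlternatingForm K p x.1 y.1) :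
    ∃ e' : g ≃ₗ[K] (((Fin p → K) × (Fin p → K)) × (Fin m → K)) × K, IsCentralExtension
      ((stdAlternatingForm K p).compl₁₂ (LinearMap.fst K _ _) (LinearMap.fst K _ _)) e' := by
  refine ⟨e ≪≫ₗ LinearEquiv.prodCongr f.symm κ, fun X Y => ?_⟩
  simp [he X Y, ← hκ]

end Field

theorem IsCentralExtension.nonempty_lieEquiv_heisenbergAbelian {K g : Type*} [RCLike K]
    [LieRing g] [LieAlgebra K g] {p m : ℕ}
    {e : g ≃ₗ[K] (((Fin p → K) × (Fin p → K)) × (Fin m → K)) × K} (he : IsCentralExtension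
      ((stdAlternatingForm K p).compl₁₂ (LinearMap.fst K _ _) (LinearMap.fst K _ _)) e) :
    Nonempty (g ≃ₗ⁅K⁆ HeisenbergAbelian K p m) := by
  let ψ : g ≃ₗ[K] HeisenbergAbelian K p m := e ≪≫ₗ LinearEquiv.prodAssoc K _ _ _ ≪≫ₗ
    LinearEquiv.prodCongr (.refl K _) (LinearEquiv.prodComm K _ _)
  refine ⟨{ ψ with map_lie' := fun {X Y} => ?_ }⟩
  change ψ ⁅X, Y⁆ = HeisenbergAbelian.brak (ψ X) (ψ Y)
  simp [ψ, he X Y, HeisenbergAbelian.brak, stdAlternatingForm_apply, Prod.ext_iff]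

end CentralExtension

theorem exists_injective_cyclicSum_eq_zero_or_equiv_of_finrank_add_finrank_eq_six
    {K E W : Type*} [Field K] [AddCommGroup E] [Module K E] [FiniteDimensional K E]
    [AddCommGroup W] [Module K W] [FiniteDimensional K W] {β : E →ₗ[K] E →ₗ[K] W}
    (hβ : β.IsAlt) (hspan : map₂ β ⊤ ⊤ = ⊤) (hdim : finrank K E + finrank K W = 6) :
    (∃ φ : W →ₗ[K] Dual K E, Function.Injective φ ∧ cyclicSum β hβ φ = 0) ∨
      ∃ (κ : W ≃ₗ[K] K) (f : (((Fin 2 → K) × (Fin 2 → K)) × (Fin 1 → K)) ≃ₗ[K] E),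
        ∀ x y, κ (β (f x) (f y)) = stdAlternatingForm K 2 x.1 y.1 := by
  have hchoose : finrank K W ≤ (finrank K E).choose 2 :=
    finrank_le_choose_two_of_map₂_eq_top hβ hspan
  have hE3 : 3 ≤ finrank K E := by
    by_contra! hE
    have hW : finrank K W ≤ 1 := hchoose.trans (Nat.choose_le_choose 2 (Nat.le_of_lt_succ hE))
    omega
  obtain hW | hW | hW | hW : finrank K W = 0 ∨ finrank K W = 1 ∨ finrank K W = 2 ∨
      finrank K W = 3 := by omega
  · have : Subsingleton W := finrank_zero_iff.mp hW
    exact .inl ⟨0, Function.injective_of_subsingleton _, map_zero _⟩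
  · exact exists_injective_cyclicSum_eq_zero_or_equiv_of_finrank_eq_five hβ hspan (by omega) hW
  · exact .inl (exists_injective_cyclicSum_eq_zero_of_finrank_eq_four hβ hspan (by omega) hW)
  · exact .inl (exists_injective_cyclicSum_eq_zero_of_finrank_eq_three hβ hspan (by omega) hW)

/-- Here `h₅ ⊕ K` is encoded as the central extension of `K⁵` by `K` given by the standard
alternating form of rank 4. -/
theorem symplectic_of_sixDim_twoStep_not_heisenberg_general {K g : Type*} [Field K] [LieRing g]
    [LieAlgebra K g] (hg : ∀ X Y Z : g, ⁅⁅X, Y⁆, Z⁆ = 0) (h6 : finrank K g = 6)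
    (hne : ¬ ∃ e : g ≃ₗ[K] (((Fin 2 → K) × (Fin 2 → K)) × (Fin 1 → K)) × K, IsCentralExtension
      ((stdAlternatingForm K 2).compl₁₂ (LinearMap.fst K _ _) (LinearMap.fst K _ _)) e) :
    ∃ θ : LinearMap.BilinForm K g, IsSymplecticBilinForm θ := by
  have : FiniteDimensional K g := .of_finrank_pos (by omega)
  obtain ⟨E, W, β, e, hβ, hspan, he⟩ := exists_isCentralExtension (K := K) hg
  have hdim : finrank K E + finrank K W = 6 := by rw [← finrank_prod, ← e.finrank_eq, h6]
  obtain ⟨φ, hφ, hclosed⟩ | ⟨κ, f, hκ⟩ :=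
    exists_injective_cyclicSum_eq_zero_or_equiv_of_finrank_add_finrank_eq_six
      hβ hspan hdim
  · exact he.exists_isSymplecticBilinForm hβ hφ hclosed (by rw [h6]; decide)
  · exact absurd (he.exists_stdAlternatingForm κ f hκ) hne

/-- Every 6-dimensional 2-step nilpotent Lie algebra over `K` which is not isomorphic to
`h₅ ⊕ K` (the direct product of the 5-dimensional Heisenberg Lie algebra with the
1-dimensional abelian Lie algebra) admits a symplectic form. -/
theorem symplectic_of_sixDim_twoStep_not_heisenberg
    (K : Type*) [RCLike K] (g : Type*) [LieRing g] [LieAlgebra K g] [FiniteDimensional K g]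
    (h2 : IsTwoStepNilpotent g) (h6 : Module.finrank K g = 6)
    (hne : ¬ Nonempty (g ≃ₗ⁅K⁆ HeisenbergAbelian K 2 1)) :
    ∃ θ : g → g → K, IsSymplecticForm K g θ := by
  obtain ⟨θ, hθ⟩ := symplectic_of_sixDim_twoStep_not_heisenberg_general h2.1 h6
    fun ⟨_, he⟩ => hne he.nonempty_lieEquiv_heisenbergAbelian
  exact ⟨_, hθ.isSymplecticForm⟩
end

section
/- For k ≥ 1, the free 2-step nilpotent Lie algebra n_{k,2} on k generators over K (K = ℝ or ℂ) admits a symplectic form if and only if k = 3. -/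
/-- The free 2-step nilpotent Lie algebra on `k` generators over `K`: the quotient of the
free Lie algebra on `k` generators by the second term of its lower central series. -/
abbrev FreeTwoStepNilpotent (K : Type*) [RCLike K] (k : ℕ) :=
  FreeLieAlgebra K (Fin k) ⧸
    LieModule.lowerCentralSeries K (FreeLieAlgebra K (Fin k)) (FreeLieAlgebra K (Fin k)) 2

/-!
The free 2-step nilpotent Lie algebra on a basis of `V` is `V ⊕ ⋀²V` with bracket
`⁅(v, a), (w, b)⁆ = (0, v ∧ w)`. If `θ` is a symplectic form on it, closedness gives
`θ ⁅X, Y⁆ Z = 0` for central `Z`, so `⋀²V` is isotropic and `θ` embeds it into the dual of `V`.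
Hence `n.choose 2 ≤ n` for `n = dim V`, that is `n ≤ 3`, and `n = 1, 2` are excluded because then
the total dimension `n + n.choose 2` is odd.

For `n = 3` the cross product identifies `⋀²V` with `V`, and
`θ (v, a) (w, b) = D v ⬝ᵥ b - D w ⬝ᵥ a` is nondegenerate if the matrix `D` is invertible. Since
`D x ⬝ᵥ y ⨯₃ z` summed over the cyclic permutations of `x, y, z` equals `tr D * det (x, y, z)`, the
form is closed if `D` has trace zero, e.g. for `D = diag (1, 1, -2)`.
-/

open Module exteriorPower

theorem even_finrank_of_isAlt_of_nondegenerate {K V : Type*} [Field K] [NeZero (2 : K)]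
    [AddCommGroup V] [Module K V] [FiniteDimensional K V] {B : LinearMap.BilinForm K V}
    (hAlt : B.IsAlt) (hB : B.Nondegenerate) : Even (finrank K V) := by
  set b := finBasis K V
  set M := LinearMap.BilinForm.toMatrix b B
  have hskew : M.transpose = -M := by
    ext i j
    simp [M, LinearMap.BilinForm.toMatrix_apply, ← LinearMap.IsAlt.neg hAlt (b j) (b i)]
  have hdet : M.det ≠ 0 := (LinearMap.BilinForm.nondegenerate_iff_det_ne_zero b).1 hB
  have hsign : M.det = (-1) ^ finrank K V * M.det := by
    calc M.det = M.transpose.det := M.det_transpose.symm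
      _ = (-1) ^ finrank K V * M.det := by rw [hskew, Matrix.det_neg, Fintype.card_fin]
  by_contra hodd
  rw [(Nat.not_even_iff_odd.1 hodd).neg_one_pow, neg_one_mul, eq_neg_iff_add_eq_zero,
    ← two_mul] at hsign
  exact mul_ne_zero two_ne_zero hdet hsign

section Wedge

variable (R : Type*) {V N : Type*} [CommRing R] [AddCommGroup V] [Module R V]
  [AddCommGroup N] [Module R N]

/-- The exterior product `v ∧ w` of two vectors, as a bilinear map into the second exterior
power. -/
noncomputable def wedge : V →ₗ[R] V →ₗ[R] ⋀[R]^2 V :=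
  LinearMap.mk₂ R (fun v w => ιMulti R 2 ![v, w])
    (fun v v' w => (ιMulti R 2).toMultilinearMap.cons_add ![w] v v')
    (fun c v w => (ιMulti R 2).toMultilinearMap.cons_smul ![w] c v)
    (fun v w w' => ((ιMulti R 2).curryLeft v).toMultilinearMap.cons_add ![] w w')
    (fun c v w => ((ιMulti R 2).curryLeft v).toMultilinearMap.cons_smul ![] c w)

theorem wedge_apply (v w : V) : wedge R v w = ιMulti R 2 ![v, w] := rfl

theorem wedge_self (v : V) : wedge R v v = 0 :=
  (ιMulti R 2).map_eq_zero_of_eq ![v, v] (i := 0) (j := 1) rfl zero_ne_one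

variable {R}

theorem wedge_hom_ext {f g : ⋀[R]^2 V →ₗ[R] N} (h : ∀ v w, f (wedge R v w) = g (wedge R v w)) :
    f = g := by
  ext m
  rw [LinearMap.compAlternatingMap_apply, LinearMap.compAlternatingMap_apply,
    List.ofFn_injective (by simp : List.ofFn m = List.ofFn ![m 0, m 1])]
  exact h (m 0) (m 1)

/-- The linear map `v ∧ w ↦ B v w` out of the second exterior power induced by an alternating
bilinear map `B`. -/
noncomputable def wedgeLift (B : V →ₗ[R] V →ₗ[R] N) (hB : ∀ v, B v v = 0) : ⋀[R]^2 V →ₗ[R] N :=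
  alternatingMapLinearEquiv
    { toFun := fun m => B (m 0) (m 1)
      map_update_add' := by
        intro _ m i
        fin_cases i <;> simp
      map_update_smul' := by
        intro _ m i
        fin_cases i <;> simp
      map_eq_zero_of_eq' := by
        intro m i j hm hij
        have h01 : m 0 = m 1 := by
          fin_cases i <;> fin_cases j <;> simp_all
        rw [h01, hB] }

@[simp]
theorem wedgeLift_wedge (B : V →ₗ[R] V →ₗ[R] N) (hB : ∀ v, B v v = 0) (v w : V) :
    wedgeLift B hB (wedge R v w) = B v w := by
  simp [wedgeLift, wedge_apply]

end Wedge

/-- The free 2-step nilpotent Lie algebra on the module `V`, realised on `V × ⋀[R]^2 V` with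
bracket `⁅(v, a), (w, b)⁆ = (0, v ∧ w)`. It is a type synonym, so that the componentwise bracket
of a product of Lie algebras does not apply to it. -/
def TwoStepModel (R V : Type*) [CommRing R] [AddCommGroup V] [Module R V] : Type _ := V × ⋀[R]^2 V

namespace TwoStepModel

variable (R V : Type*) [CommRing R] [AddCommGroup V] [Module R V]

noncomputable instance : AddCommGroup (TwoStepModel R V) :=
  inferInstanceAs (AddCommGroup (V × ⋀[R]^2 V))

noncomputable instance : Module R (TwoStepModel R V) :=
  inferInstanceAs (Module R (V × ⋀[R]^2 V))

/-- The identification of the model with the underlying product module. -/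
noncomputable def equivProd : TwoStepModel R V ≃ₗ[R] V × ⋀[R]^2 V := LinearEquiv.refl R _

variable {R V}

/-- The component of an element in `V`. -/
noncomputable def fst : TwoStepModel R V →ₗ[R] V := LinearMap.fst R V (⋀[R]^2 V)

/-- The component of an element in `⋀[R]^2 V`. -/
noncomputable def snd : TwoStepModel R V →ₗ[R] ⋀[R]^2 V := LinearMap.snd R V (⋀[R]^2 V)

/-- The inclusion of the space of generators. -/
noncomputable def inl : V →ₗ[R] TwoStepModel R V := LinearMap.inl R V (⋀[R]^2 V)

/-- The inclusion of the central summand. -/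
noncomputable def inr : ⋀[R]^2 V →ₗ[R] TwoStepModel R V := LinearMap.inr R V (⋀[R]^2 V)

@[simp] theorem fst_inl (v : V) : fst (inl v : TwoStepModel R V) = v := rfl
@[simp] theorem snd_inl (v : V) : snd (inl v : TwoStepModel R V) = 0 := rfl
@[simp] theorem fst_inr (a : ⋀[R]^2 V) : fst (inr a) = 0 := rfl
@[simp] theorem snd_inr (a : ⋀[R]^2 V) : snd (inr a) = a := rfl

theorem inl_fst_add_inr_snd (p : TwoStepModel R V) : inl (fst p) + inr (snd p) = p :=
  Prod.fst_add_snd p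

@[ext]
theorem ext {p q : TwoStepModel R V} (h₁ : fst p = fst q) (h₂ : snd p = snd q) : p = q :=
  Prod.ext h₁ h₂

noncomputable instance : Bracket (TwoStepModel R V) (TwoStepModel R V) where
  bracket p q := inr (wedge R (fst p) (fst q))

theorem lie_def (p q : TwoStepModel R V) : ⁅p, q⁆ = inr (wedge R (fst p) (fst q)) := rfl

noncomputable instance : LieRing (TwoStepModel R V) where
  add_lie p q r := by simp [lie_def]
  lie_add p q r := by simp [lie_def]
  lie_self p := by simp [lie_def, wedge_self]
  leibniz_lie p q r := by simp [lie_def]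

noncomputable instance : LieAlgebra R (TwoStepModel R V) where
  lie_smul c p q := by simp [lie_def]

@[simp] theorem fst_lie (p q : TwoStepModel R V) : fst ⁅p, q⁆ = 0 := rfl
@[simp] theorem snd_lie (p q : TwoStepModel R V) : snd ⁅p, q⁆ = wedge R (fst p) (fst q) := rfl

theorem lie_inr (p : TwoStepModel R V) (a : ⋀[R]^2 V) : ⁅p, inr a⁆ = 0 := by
  simp [lie_def]

theorem lie_inl_inl (v w : V) : ⁅(inl v : TwoStepModel R V), inl w⁆ = inr (wedge R v w) := rfl

theorem lie_lie_eq_zero (p q r : TwoStepModel R V) : ⁅p, ⁅q, r⁆⁆ = 0 :=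
  lie_inr p _

theorem eq_top_of_inl_mem {S : LieSubalgebra R (TwoStepModel R V)}
    (hS : ∀ v, (inl v : TwoStepModel R V) ∈ S) : S = ⊤ := by
  have hinr : S.toSubmodule.mkQ ∘ₗ inr = 0 := wedge_hom_ext fun v w => by
    rw [LinearMap.comp_apply, ← lie_inl_inl, Submodule.mkQ_apply, LinearMap.zero_apply,
      Submodule.Quotient.mk_eq_zero]
    exact S.lie_mem (hS v) (hS w)
  rw [eq_top_iff]
  intro p _
  rw [← inl_fst_add_inr_snd p]
  exact S.add_mem (hS _) ((Submodule.Quotient.mk_eq_zero _).1 (LinearMap.congr_fun hinr _))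

section Lift

variable {L : Type*} [LieRing L] [LieAlgebra R L]

/-- The map `v ∧ w ↦ ⁅f v, f w⁆` induced by a linear map `f` to a Lie algebra. -/
noncomputable def wedgeBracket (f : V →ₗ[R] L) : ⋀[R]^2 V →ₗ[R] L :=
  wedgeLift (LinearMap.mk₂ R (fun v w => ⁅f v, f w⁆) (by simp) (by simp) (by simp) (by simp))
    fun v => by rw [LinearMap.mk₂_apply, lie_self]

@[simp]
theorem wedgeBracket_wedge (f : V →ₗ[R] L) (v w : V) :
    wedgeBracket f (wedge R v w) = ⁅f v, f w⁆ := by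
  rw [wedgeBracket, wedgeLift_wedge, LinearMap.mk₂_apply]

theorem lie_wedgeBracket (f : V →ₗ[R] L) (hL : ∀ x y z : L, ⁅x, ⁅y, z⁆⁆ = 0) (x : L)
    (a : ⋀[R]^2 V) : ⁅x, wedgeBracket f a⁆ = 0 := by
  have h : LieModule.toEnd R L L x ∘ₗ wedgeBracket f = 0 := wedge_hom_ext fun v w => by simp [hL]
  exact LinearMap.congr_fun h a

/-- The homomorphism from the model to a Lie algebra with vanishing triple brackets that extends
a linear map `f` on the generators. -/
noncomputable def lift (f : V →ₗ[R] L) (hL : ∀ x y z : L, ⁅x, ⁅y, z⁆⁆ = 0) :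
    TwoStepModel R V →ₗ⁅R⁆ L where
  toLinearMap := f ∘ₗ fst + wedgeBracket f ∘ₗ snd
  map_lie' := by
    intro p q
    have wedgeBracket_lie (a : ⋀[R]^2 V) (x : L) : ⁅wedgeBracket f a, x⁆ = 0 := by
      rw [← lie_skew, lie_wedgeBracket f hL, neg_zero]
    simp [lie_wedgeBracket f hL, wedgeBracket_lie]

@[simp]
theorem lift_inl (f : V →ₗ[R] L) (hL : ∀ x y z : L, ⁅x, ⁅y, z⁆⁆ = 0) (v : V) :
    lift f hL (inl v) = f v := by
  change f (fst (inl v)) + wedgeBracket f (snd (inl v)) = f v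
  simp

end Lift

theorem finrank_eq [Nontrivial R] [Module.Free R V] [Module.Finite R V] :
    finrank R (TwoStepModel R V) = finrank R V + (finrank R V).choose 2 := by
  rw [(equivProd R V).finrank_eq, finrank_prod, exteriorPower.finrank_eq]

end TwoStepModel

section FreeQuotient

open LieModule

variable {R L : Type*} [CommRing R] [LieRing L] [LieAlgebra R L]

theorem lowerCentralSeries_two_eq_bot_iff :
    lowerCentralSeries R L L 2 = ⊥ ↔ ∀ x y z : L, ⁅x, ⁅y, z⁆⁆ = 0 := by
  rw [lowerCentralSeries_succ, lowerCentralSeries_succ, lowerCentralSeries_zero,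
    LieSubmodule.lie_eq_bot_iff]
  constructor
  · intro h x y z
    exact h x trivial _ (LieSubmodule.lie_mem_lie (LieSubmodule.mem_top y) (LieSubmodule.mem_top z))
  · intro h x _ m hm
    have hle : ⁅(⊤ : LieIdeal R L), (⊤ : LieIdeal R L)⁆ ≤ maxTrivSubmodule R L L :=
      (LieSubmodule.lie_le_iff _ _ _).2 fun y _ z _ => (mem_maxTrivSubmodule _ _ _ _).2
        fun x => h x y z
    exact (mem_maxTrivSubmodule _ _ _ _).1 (hle hm) x

/-- The canonical projection of a Lie algebra onto its quotient by an ideal, as a homomorphism of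
Lie algebras. -/
def quotientMkHom (I : LieIdeal R L) : L →ₗ⁅R⁆ L ⧸ I where
  toLinearMap := I.toSubmodule.mkQ
  map_lie' {x y} := LieSubmodule.Quotient.mk_bracket I x y

theorem quotientMkHom_surjective (I : LieIdeal R L) : Function.Surjective (quotientMkHom I) :=
  I.toSubmodule.mkQ_surjective

theorem ker_quotientMkHom (I : LieIdeal R L) : (quotientMkHom I).ker = I := by
  ext x
  exact LieSubmodule.Quotient.mk_eq_zero' (N := I)

theorem lowerCentralSeries_quotient_self_eq_bot (k : ℕ) :
    lowerCentralSeries R (L ⧸ lowerCentralSeries R L L k)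
      (L ⧸ lowerCentralSeries R L L k) k = ⊥ := by
  rw [← LieIdeal.lowerCentralSeries_map_eq k (quotientMkHom_surjective _), LieIdeal.map_eq_bot_iff,
    ker_quotientMkHom]

namespace TwoStepModel

variable {X V : Type*} [AddCommGroup V] [Module R V] (b : Basis X R V)

/-- The homomorphism from the free Lie algebra on a basis of `V` that is the identity on
generators. -/
noncomputable def ofFree : FreeLieAlgebra R X →ₗ⁅R⁆ TwoStepModel R V :=
  FreeLieAlgebra.lift R fun i => inl (b i)

theorem ofFree_surjective : Function.Surjective (ofFree b) := by
  rw [← LieHom.range_eq_top]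
  refine eq_top_of_inl_mem fun v => ?_
  have hmkQ : (ofFree b).range.toSubmodule.mkQ ∘ₗ inl = 0 := b.ext fun i => by
    rw [LinearMap.comp_apply, Submodule.mkQ_apply, LinearMap.zero_apply,
      Submodule.Quotient.mk_eq_zero]
    exact ⟨FreeLieAlgebra.of R i, FreeLieAlgebra.lift_of_apply _ _⟩
  exact (Submodule.Quotient.mk_eq_zero _).1 (LinearMap.congr_fun hmkQ v)

theorem lowerCentralSeries_two_le_ker_ofFree :
    lowerCentralSeries R (FreeLieAlgebra R X) (FreeLieAlgebra R X) 2 ≤ (ofFree b).ker := by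
  rw [← LieIdeal.map_eq_bot_iff, ← le_bot_iff,
    ← (lowerCentralSeries_two_eq_bot_iff (R := R)).2 (lie_lie_eq_zero (R := R) (V := V))]
  exact LieIdeal.map_lowerCentralSeries_le 2

/-- The homomorphism from the model to the free 2-step nilpotent Lie algebra on a basis of `V`
that is the identity on generators. -/
noncomputable def toFreeQuotient : TwoStepModel R V →ₗ⁅R⁆
    FreeLieAlgebra R X ⧸ lowerCentralSeries R (FreeLieAlgebra R X) (FreeLieAlgebra R X) 2 :=
  lift (b.constr R fun i => quotientMkHom _ (FreeLieAlgebra.of R i))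
    (lowerCentralSeries_two_eq_bot_iff.1 (lowerCentralSeries_quotient_self_eq_bot (R := R) 2))

theorem toFreeQuotient_ofFree (u : FreeLieAlgebra R X) :
    toFreeQuotient b (ofFree b u) = quotientMkHom _ u := by
  have hcomp : (toFreeQuotient b).comp (ofFree b) = quotientMkHom _ :=
    FreeLieAlgebra.hom_ext fun i => by
      simp [toFreeQuotient, ofFree]
  exact LieHom.congr_fun hcomp u

theorem toFreeQuotient_bijective : Function.Bijective (toFreeQuotient b) := by
  constructor
  · rw [← LieHom.ker_eq_bot, LieSubmodule.eq_bot_iff]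
    intro p hp
    obtain ⟨u, rfl⟩ := ofFree_surjective b p
    rw [LieHom.mem_ker, toFreeQuotient_ofFree, ← LieHom.mem_ker, ker_quotientMkHom] at hp
    exact lowerCentralSeries_two_le_ker_ofFree b hp
  · intro q
    obtain ⟨u, rfl⟩ := quotientMkHom_surjective _ q
    exact ⟨ofFree b u, toFreeQuotient_ofFree b u⟩

/-- The model on `V` is the free 2-step nilpotent Lie algebra on any basis of `V`. -/
noncomputable def equivFreeQuotient : TwoStepModel R V ≃ₗ⁅R⁆
    FreeLieAlgebra R X ⧸ lowerCentralSeries R (FreeLieAlgebra R X) (FreeLieAlgebra R X) 2 :=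
  LieEquiv.ofBijective (toFreeQuotient b) (toFreeQuotient_bijective b)

end TwoStepModel

end FreeQuotient

namespace IsSymplecticForm

variable {K g : Type*} [RCLike K] [LieRing g] [LieAlgebra K g] {θ : g → g → K}

/-- A symplectic form, bundled as a bilinear form. -/
def bilin (hθ : IsSymplecticForm K g θ) : LinearMap.BilinForm K g :=
  have zero_left (Z : g) : θ 0 Z = 0 := by simpa using hθ.1 1 0 0 Z
  have zero_right (X : g) : θ X 0 = 0 := by simpa using hθ.2.1 1 X 0 0
  LinearMap.mk₂ K θ
    (fun X Y Z => by simpa using hθ.1 1 X Y Z)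
    (fun c X Z => by simpa [zero_left] using hθ.1 c X 0 Z)
    (fun X Y Z => by simpa using hθ.2.1 1 X Y Z)
    (fun c X Y => by simpa [zero_right] using hθ.2.1 c X Y 0)

theorem isAlt_bilin (hθ : IsSymplecticForm K g θ) : hθ.bilin.IsAlt := hθ.2.2.1

theorem separatingLeft_bilin (hθ : IsSymplecticForm K g θ) : hθ.bilin.SeparatingLeft := hθ.2.2.2.1

theorem bilin_closed (hθ : IsSymplecticForm K g θ) (X Y Z : g) :
    hθ.bilin ⁅X, Y⁆ Z + hθ.bilin ⁅Y, Z⁆ X + hθ.bilin ⁅Z, X⁆ Y = 0 :=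
  hθ.2.2.2.2 X Y Z

theorem of_bilinForm {B : LinearMap.BilinForm K g} (hAlt : B.IsAlt) (hB : B.SeparatingLeft)
    (hclosed : ∀ X Y Z, B ⁅X, Y⁆ Z + B ⁅Y, Z⁆ X + B ⁅Z, X⁆ Y = 0) :
    IsSymplecticForm K g fun X Y => B X Y :=
  ⟨by simp, by simp, hAlt, hB, hclosed⟩

theorem comp_lieEquiv {h : Type*} [LieRing h] [LieAlgebra K h] (hθ : IsSymplecticForm K g θ)
    (e : h ≃ₗ⁅K⁆ g) : IsSymplecticForm K h fun X Y => θ (e X) (e Y) := by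
  obtain ⟨hleft, hright, hself, hsep, hclosed⟩ := hθ
  refine ⟨by simp [hleft], by simp [hright], fun X => hself (e X), fun X hX => ?_,
    fun X Y Z => by simp only [LieEquiv.map_lie, hclosed]⟩
  refine e.injective ((hsep (e X) fun Y => ?_).trans (map_zero e).symm)
  simpa using hX (e.symm Y)

theorem even_finrank [FiniteDimensional K g] (hθ : IsSymplecticForm K g θ) :
    Even (finrank K g) :=
  even_finrank_of_isAlt_of_nondegenerate hθ.isAlt_bilin
    (hθ.isAlt_bilin.isRefl.nondegenerate_iff_separatingLeft.2 hθ.separatingLeft_bilin)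

theorem bilin_lie_eq_zero_of_mem_center (hθ : IsSymplecticForm K g θ) (X Y : g) {Z : g}
    (hZ : Z ∈ LieAlgebra.center K g) : hθ.bilin ⁅X, Y⁆ Z = 0 := by
  have hZ' (W : g) : ⁅W, Z⁆ = 0 := (LieModule.mem_maxTrivSubmodule K g g Z).1 hZ W
  have hclosed := hθ.bilin_closed X Y Z
  rwa [← lie_skew Z X, hZ', hZ', neg_zero, map_zero, LinearMap.zero_apply, LinearMap.zero_apply,
    add_zero, add_zero] at hclosed

end IsSymplecticForm

theorem eq_three_of_choose_two_le_of_even_add_choose_two {n : ℕ} (hpos : 0 < n)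
    (hle : n.choose 2 ≤ n) (heven : Even (n + n.choose 2)) : n = 3 := by
  have hn : n ≤ 3 := by
    by_contra! hn
    have hmul : n * 3 ≤ n * (n - 1) := Nat.mul_le_mul_left n (by lia)
    rw [Nat.choose_two_right] at hle
    lia
  interval_cases n <;> first | rfl | exact absurd heven (by decide)

namespace TwoStepModel

section Obstruction

variable {K V : Type*} [RCLike K] [AddCommGroup V] [Module K V]
  {θ : TwoStepModel K V → TwoStepModel K V → K}

theorem inr_mem_center (a : ⋀[K]^2 V) : inr a ∈ LieAlgebra.center K (TwoStepModel K V) :=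
  (LieModule.mem_maxTrivSubmodule K _ _ _).2 fun p => lie_inr p a

theorem bilin_inr_inr (hθ : IsSymplecticForm K (TwoStepModel K V) θ) (a b : ⋀[K]^2 V) :
    hθ.bilin (inr a) (inr b) = 0 := by
  have h : hθ.bilin.flip (inr b) ∘ₗ inr = 0 := wedge_hom_ext fun v w =>
    hθ.bilin_lie_eq_zero_of_mem_center (inl v) (inl w) (inr_mem_center b)
  exact LinearMap.congr_fun h a

theorem injective_bilin_inr_inl (hθ : IsSymplecticForm K (TwoStepModel K V) θ) :
    Function.Injective (hθ.bilin.compl₁₂ inr inl) := by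
  rw [injective_iff_map_eq_zero]
  intro a ha
  have hinr : (inr a : TwoStepModel K V) = 0 := hθ.separatingLeft_bilin _ fun p => by
    rw [← inl_fst_add_inr_snd p, map_add, bilin_inr_inr, add_zero]
    exact LinearMap.congr_fun ha (fst p)
  simpa using congrArg snd hinr

variable [FiniteDimensional K V]

theorem choose_two_le_finrank (hθ : IsSymplecticForm K (TwoStepModel K V) θ) :
    (finrank K V).choose 2 ≤ finrank K V := by
  calc (finrank K V).choose 2 = finrank K (⋀[K]^2 V) := (exteriorPower.finrank_eq K 2).symm
    _ ≤ finrank K (Dual K V) :=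
      LinearMap.finrank_le_finrank_of_injective (injective_bilin_inr_inl hθ)
    _ = finrank K V := Subspace.dual_finrank_eq

theorem finrank_eq_three_of_isSymplecticForm [Nontrivial V]
    (hθ : IsSymplecticForm K (TwoStepModel K V) θ) : finrank K V = 3 := by
  have : FiniteDimensional K (TwoStepModel K V) := .equiv (equivProd K V).symm
  have heven : Even (finrank K V + (finrank K V).choose 2) :=
    finrank_eq (R := K) (V := V) ▸ hθ.even_finrank
  exact eq_three_of_choose_two_le_of_even_add_choose_two finrank_pos
    (choose_two_le_finrank hθ) heven

end Obstruction

section Pairing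

variable {R V : Type*} [CommRing R] [AddCommGroup V] [Module R V]

/-- The alternating form on the model for which both summands are isotropic and which pairs `V`
with `⋀[R]^2 V` through `ω`. -/
noncomputable def pairingForm (ω : V →ₗ[R] ⋀[R]^2 V →ₗ[R] R) :
    LinearMap.BilinForm R (TwoStepModel R V) :=
  ω.compl₁₂ fst snd - (ω.compl₁₂ fst snd).flip

theorem pairingForm_apply (ω : V →ₗ[R] ⋀[R]^2 V →ₗ[R] R) (p q : TwoStepModel R V) :
    pairingForm ω p q = ω (fst p) (snd q) - ω (fst q) (snd p) := rfl

theorem isAlt_pairingForm (ω : V →ₗ[R] ⋀[R]^2 V →ₗ[R] R) : (pairingForm ω).IsAlt :=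
  fun _ => sub_self _

theorem separatingLeft_pairingForm {ω : V →ₗ[R] ⋀[R]^2 V →ₗ[R] R} (hω : ω.Nondegenerate) :
    (pairingForm ω).SeparatingLeft := fun p hp => by
  ext1
  · refine hω.1 _ fun a => ?_
    simpa [pairingForm_apply] using hp (inr a)
  · refine hω.2 _ fun v => ?_
    simpa [pairingForm_apply] using hp (inl v)

end Pairing

theorem isSymplecticForm_pairingForm {K V : Type*} [RCLike K] [AddCommGroup V] [Module K V]
    {ω : V →ₗ[K] ⋀[K]^2 V →ₗ[K] K} (hω : ω.Nondegenerate)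
    (hclosed : ∀ x y z, ω x (wedge K y z) + ω y (wedge K z x) + ω z (wedge K x y) = 0) :
    IsSymplecticForm K (TwoStepModel K V) fun p q => pairingForm ω p q := by
  refine .of_bilinForm (isAlt_pairingForm ω) (separatingLeft_pairingForm hω) fun p q r => ?_
  simp only [pairingForm_apply, fst_lie, snd_lie, map_zero, LinearMap.zero_apply, zero_sub]
  linear_combination -hclosed (fst p) (fst q) (fst r)

end TwoStepModel

section CrossProduct

open Matrix

theorem sum_mulVec_dotProduct_cross {R : Type*} [CommRing R] (D : Matrix (Fin 3) (Fin 3) R)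
    (x y z : Fin 3 → R) :
    D *ᵥ x ⬝ᵥ y ⨯₃ z + D *ᵥ y ⬝ᵥ z ⨯₃ x + D *ᵥ z ⬝ᵥ x ⨯₃ y = D.trace * (x ⬝ᵥ y ⨯₃ z) := by
  simp only [cross_apply, vec3_dotProduct, mulVec, trace_fin_three, cons_val]
  ring

/-- The map `v ∧ w ↦ v ⨯₃ w` identifying `⋀²R³` with `R³`. -/
noncomputable def wedgeCross (R : Type*) [CommRing R] : ⋀[R]^2 (Fin 3 → R) →ₗ[R] Fin 3 → R :=
  wedgeLift crossProduct cross_self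

theorem wedgeCross_surjective (R : Type*) [CommRing R] : Function.Surjective (wedgeCross R) := by
  intro u
  refine ⟨u 0 • wedge R ![0, 1, 0] ![0, 0, 1] + u 1 • wedge R ![0, 0, 1] ![1, 0, 0] +
    u 2 • wedge R ![1, 0, 0] ![0, 1, 0], ?_⟩
  ext i
  fin_cases i <;> simp [wedgeCross, cross_apply]

theorem wedgeCross_injective (K : Type*) [Field K] : Function.Injective (wedgeCross K) :=
  (LinearMap.injective_iff_surjective_of_finrank_eq_finrank
    (by simp [exteriorPower.finrank_eq])).2 (wedgeCross_surjective K)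

/-- The pairing of `K³` with `⋀²K³` given by `(x, y ∧ z) ↦ D x ⬝ᵥ y ⨯₃ z`. -/
noncomputable def crossPairing {R : Type*} [CommRing R] (D : Matrix (Fin 3) (Fin 3) R) :
    (Fin 3 → R) →ₗ[R] ⋀[R]^2 (Fin 3 → R) →ₗ[R] R :=
  (dotProductBilin R R).compl₁₂ D.mulVecLin (wedgeCross R)

theorem crossPairing_apply {R : Type*} [CommRing R] (D : Matrix (Fin 3) (Fin 3) R)
    (x : Fin 3 → R) (a : ⋀[R]^2 (Fin 3 → R)) : crossPairing D x a = D *ᵥ x ⬝ᵥ wedgeCross R a :=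
  rfl

theorem crossPairing_closed {R : Type*} [CommRing R] {D : Matrix (Fin 3) (Fin 3) R}
    (htrace : D.trace = 0) (x y z : Fin 3 → R) :
    crossPairing D x (wedge R y z) + crossPairing D y (wedge R z x) +
      crossPairing D z (wedge R x y) = 0 := by
  simp only [crossPairing_apply, wedgeCross, wedgeLift_wedge]
  rw [sum_mulVec_dotProduct_cross, htrace, zero_mul]

theorem nondegenerate_crossPairing {K : Type*} [Field K] {D : Matrix (Fin 3) (Fin 3) K}
    (hD : IsUnit D) : (crossPairing D).Nondegenerate := by
  constructor
  · intro x hx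
    have hDx : D *ᵥ x = 0 := dotProduct_eq_zero _ fun u => by
      obtain ⟨a, rfl⟩ := wedgeCross_surjective K u
      exact hx a
    exact mulVec_injective_iff_isUnit.2 hD (hDx.trans (mulVec_zero D).symm)
  · intro a ha
    have hcross : wedgeCross K a = 0 := dotProduct_eq_zero _ fun u => by
      obtain ⟨x, rfl⟩ := mulVec_surjective_iff_isUnit.2 hD u
      rw [dotProduct_comm]
      exact ha x
    exact wedgeCross_injective K (hcross.trans (map_zero _).symm)

theorem exists_isSymplecticForm_twoStepModel_fin_three (K : Type*) [RCLike K] :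
    ∃ θ, IsSymplecticForm K (TwoStepModel K (Fin 3 → K)) θ := by
  set D : Matrix (Fin 3) (Fin 3) K := diagonal ![1, 1, -2]
  have htrace : D.trace = 0 := by
    rw [trace_diagonal, Fin.sum_univ_three]
    simp only [cons_val]
    ring
  have hunit : IsUnit D := by
    rw [isUnit_iff_isUnit_det, isUnit_iff_ne_zero]
    simp [D, Fin.prod_univ_three]
  exact ⟨_, TwoStepModel.isSymplecticForm_pairingForm (nondegenerate_crossPairing hunit)
    (crossPairing_closed htrace)⟩

end CrossProduct

/-- For `k ≥ 1`, the free 2-step nilpotent Lie algebra on `k` generators admits a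
symplectic form if and only if `k = 3`. -/
theorem freeTwoStepNilpotent_symplectic_iff (K : Type*) [RCLike K] (k : ℕ) (hk : 1 ≤ k) :
    (∃ θ : FreeTwoStepNilpotent K k → FreeTwoStepNilpotent K k → K,
        IsSymplecticForm K (FreeTwoStepNilpotent K k) θ) ↔ k = 3 := by
  let e : TwoStepModel K (Fin k → K) ≃ₗ⁅K⁆ FreeTwoStepNilpotent K k :=
    TwoStepModel.equivFreeQuotient (Pi.basisFun K (Fin k))
  constructor
  · rintro ⟨θ, hθ⟩
    have : Nonempty (Fin k) := ⟨⟨0, hk⟩⟩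
    rw [← finrank_fin_fun K (n := k)]
    exact TwoStepModel.finrank_eq_three_of_isSymplecticForm (hθ.comp_lieEquiv e)
  · rintro rfl
    obtain ⟨θ, hθ⟩ := exists_isSymplecticForm_twoStepModel_fin_three K
    exact ⟨_, hθ.comp_lieEquiv e.symm⟩
end

section
/- An 8-dimensional 2-step nilpotent Lie algebra over K (K = ℝ or ℂ) with characteristic sequence (2,2,2,1,1) admits a symplectic form if and only if it is not isomorphic to the Lie algebra with basis X_1,…,X_8 and nonzero brackets [X_1,X_2] = X_3, [X_1,X_4] = X_5, [X_1,X_6] = X_7, [X_2,X_4] = X_7, [X_6,X_8] = X_7 (and those obtained by skew-symmetry). -/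
/-- A 2-step nilpotent Lie algebra has characteristic sequence `(2,…,2,1,…,1)` with exactly
`k` twos iff the maximum of `rank (ad X) = dim ⁅X, g⁆` over `X ∈ g \ [g,g]` equals `k`. -/
def HasCharSeqTwos (K : Type*) [RCLike K] (g : Type*) [LieRing g] [LieAlgebra K g]
    (k : ℕ) : Prop :=
  (∀ X : g, X ∉ LieAlgebra.derivedSeries K g 1 →
      Module.finrank K ↥(LinearMap.range (LieAlgebra.ad K g X)) ≤ k) ∧
  ∃ X : g, X ∉ LieAlgebra.derivedSeries K g 1 ∧
      Module.finrank K ↥(LinearMap.range (LieAlgebra.ad K g X)) = k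
/-- The 8-dimensional 2-step nilpotent Lie algebra realized on `Fin 8 → K` with basis
`X_i = e_{i-1}` and nonzero brackets `⁅X₁,X₂⁆ = X₃`, `⁅X₁,X₄⁆ = X₅`, `⁅X₁,X₆⁆ = X₇`,
`⁅X₂,X₄⁆ = X₇`, `⁅X₆,X₈⁆ = X₇` (and those obtained by skew-symmetry): the unique
non-symplectic algebra with characteristic sequence `(2,2,2,1,1)`. -/
abbrev NonSympl8 (K : Type*) [RCLike K] : Type _ := Fin 8 → K

namespace NonSympl8

variable {K : Type*} [RCLike K]

/-- The Lie bracket. -/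
def brak (x y : NonSympl8 K) : NonSympl8 K := fun i =>
  if i = 2 then x 0 * y 1 - y 0 * x 1
  else if i = 4 then x 0 * y 3 - y 0 * x 3
  else if i = 6 then x 0 * y 5 - y 0 * x 5 + (x 1 * y 3 - y 1 * x 3) + (x 5 * y 7 - y 5 * x 7)
  else 0

instance (priority := 5000) : LieRing (NonSympl8 K) where
  bracket := brak
  add_lie x y z := by
    funext i
    show brak (x + y) z i = brak x z i + brak y z i
    fin_cases i <;> simp [brak] <;> ring
  lie_add x y z := by
    funext i
    show brak x (y + z) i = brak x y i + brak x z i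
    fin_cases i <;> simp [brak] <;> ring
  lie_self x := by
    funext i
    show brak x x i = 0
    fin_cases i <;> simp [brak]
  leibniz_lie x y z := by
    funext i
    show brak x (brak y z) i = brak (brak x y) z i + brak y (brak x z) i
    fin_cases i <;> simp [brak]

instance (priority := 5000) : LieAlgebra K (NonSympl8 K) where
  lie_smul t x y := by
    funext i
    show brak x (t • y) i = t * brak x y i
    fin_cases i <;> simp [brak] <;> ring

end NonSympl8

/-!
Let `ad x` have rank 3 and put `R = ⁅x, g⁆`. For dimension reasons some `w` outside `K x ⊕ R`
commutes with `x`, and lifting `R` through `ad x` gives `g = K x ⊕ K w ⊕ τ(K³) ⊕ R`. In these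
coordinates the bracket is determined by the action `L` of `w`, viewed as an operator on `R`, and by
the brackets of `τ(K³)`. If `[g, g]` is not contained in `R`, one can choose `w` in `[g, g]`, so
that `L = 0`. Otherwise replacing `w` by `c w + μ x` brings `L` to one of four normal forms.

Let `φ` be a pairing of a subspace `Z ⊇ [g, g]` with `g`, isotropic on `Z` and nondegenerate in the
first variable. As `g` has even dimension, `φ` extends to a nondegenerate alternating form, and
closedness of the form only involves `φ`. So the existence of a symplectic form is a question about
linear equations for a `3 × 3` matrix. They have a suitably nondegenerate solution except for
`L = diag(0, 0, 1)` with brackets of `τ(K³)` of a special shape, and this exception is the algebra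
`NonSympl8`. There, closedness forces `X₇` into the radical of every closed form.
-/

section

open Module Matrix

/-! ### Symplectic forms extending a pairing -/

variable {K : Type*} [Field K]

theorem exists_isAlt_nondegenerate {E : Type*} [AddCommGroup E] [Module K E]
    [FiniteDimensional K E] (hE : Even (finrank K E)) :
    ∃ ω : LinearMap.BilinForm K E, ω.IsAlt ∧ ω.Nondegenerate := by
  obtain ⟨k, hk⟩ := hE
  let e : E ≃ₗ[K] (Fin k → K) × (Fin k → K) := .ofFinrankEq _ _ (by simpa using hk)
  let p : E →ₗ[K] Fin k → K := .fst K _ _ ∘ₗ e.toLinearMap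
  let q : E →ₗ[K] Fin k → K := .snd K _ _ ∘ₗ e.toLinearMap
  let ω : LinearMap.BilinForm K E :=
    (dotProductBilin K K).compl₁₂ p q - (dotProductBilin K K).compl₁₂ q p
  have hω (X Y : E) : ω X Y = p X ⬝ᵥ q Y - q X ⬝ᵥ p Y := rfl
  have halt : ω.IsAlt := fun X ↦ by rw [hω, dotProduct_comm, sub_self]
  refine ⟨ω, halt, halt.isRefl.nondegenerate_iff_separatingLeft.2 fun X hX ↦ ?_⟩
  have hp : p X = 0 := dotProduct_eq_zero _ fun v ↦ by
    simpa [hω, p, q] using hX (e.symm (0, v))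
  have hq : q X = 0 := dotProduct_eq_zero _ fun v ↦ by
    simpa [hω, p, q] using hX (e.symm (v, 0))
  exact e.map_eq_zero_iff.1 (Prod.ext hp hq)

theorem finrank_orthogonal_of_injOn {E : Type*} [AddCommGroup E] [Module K E]
    [FiniteDimensional K E] {φ : LinearMap.BilinForm K E} {Z : Submodule K E}
    (hφ : ∀ z ∈ Z, φ z = 0 → z = 0) :
    finrank K Z + finrank K (φ.orthogonal Z) = finrank K E := by
  have hinj : Function.Injective (φ.domRestrict Z) :=
    (injective_iff_map_eq_zero _).2 fun z hz ↦ Subtype.ext (hφ z z.2 hz)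
  have hort : φ.orthogonal Z = (LinearMap.range (φ.domRestrict Z)).dualCoannihilator := by
    ext X
    simp [LinearMap.BilinForm.mem_orthogonal_iff, Submodule.mem_dualCoannihilator]
  rw [hort, ← LinearMap.finrank_range_of_inj hinj,
    Subspace.finrank_add_finrank_dualCoannihilator_eq]

-- The form is `φ` between `Z` and a complement, plus a symplectic form of the even-dimensional
-- quotient `W ⧸ Z`, where `W` is the orthogonal of `Z`.
theorem exists_isAlt_nondegenerate_extending {E : Type*} [AddCommGroup E] [Module K E]
    [FiniteDimensional K E] (hE : Even (finrank K E)) {Z : Submodule K E}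
    {φ : LinearMap.BilinForm K E} (hiso : ∀ z ∈ Z, ∀ z' ∈ Z, φ z z' = 0)
    (hinj : ∀ z ∈ Z, φ z = 0 → z = 0) :
    ∃ ω : LinearMap.BilinForm K E, ω.IsAlt ∧ ω.Nondegenerate ∧ ∀ z ∈ Z, ∀ X, ω z X = φ z X := by
  let W := φ.orthogonal Z
  have hZW : Z ≤ W := fun z hz z' hz' ↦ hiso z' hz' z hz
  let Z' : Submodule K W := Z.comap W.subtype
  have hZ' : finrank K Z' = finrank K Z := (Submodule.comapSubtypeEquivOfLe hZW).finrank_eq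
  have hdim : Even (finrank K (W ⧸ Z')) := by
    have hEdim : finrank K Z + finrank K W = finrank K E := finrank_orthogonal_of_injOn hinj
    have hWdim : finrank K (W ⧸ Z') + finrank K Z' = finrank K W := Z'.finrank_quotient_add_finrank
    rw [hZ'] at hWdim
    rw [← hEdim, ← hWdim] at hE
    grind
  obtain ⟨ω₀, halt₀, hnd₀⟩ := exists_isAlt_nondegenerate hdim
  obtain ⟨π, hπ⟩ := LinearMap.exists_extend (LinearMap.id : Z →ₗ[K] Z)
  obtain ⟨ρ, hρ⟩ := LinearMap.exists_extend Z'.mkQ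
  replace hπ (z : Z) : π z = z := DFunLike.congr_fun hπ z
  replace hρ (w : W) : ρ w = Z'.mkQ w := DFunLike.congr_fun hρ w
  have hρZ {z : E} (hz : z ∈ Z) : ρ z = 0 :=
    (hρ ⟨z, hZW hz⟩).trans ((Submodule.Quotient.mk_eq_zero _).2 hz)
  let ψ : LinearMap.BilinForm K E := φ ∘ₗ Z.subtype ∘ₗ π
  let ω : LinearMap.BilinForm K E := ψ - ψ.flip + ω₀.compl₁₂ ρ ρ
  have hω (X Y : E) : ω X Y = φ (π X) Y - φ (π Y) X + ω₀ (ρ X) (ρ Y) := rfl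
  have halt : ω.IsAlt := fun X ↦ by simp [hω, halt₀ (ρ X)]
  have hωZ (z : E) (hz : z ∈ Z) (X : E) : ω z X = φ z X := by
    simp [hω, hπ ⟨z, hz⟩, hρZ hz, hiso (π X) (π X).2 z hz]
  refine ⟨ω, halt, halt.isRefl.nondegenerate_iff_separatingLeft.2 fun X hX ↦ ?_, hωZ⟩
  have hXW : X ∈ W := fun z hz ↦ by rw [← hωZ z hz X, ← halt.neg_eq, hX z, neg_zero]
  have hρX : ρ X = 0 := hnd₀.1 _ fun q ↦ by
    obtain ⟨w, rfl⟩ := Z'.mkQ_surjective q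
    simpa [hω, hρ, w.2 (π X) (π X).2, hXW (π w) (π w).2] using hX w
  have hXZ : X ∈ Z := (Submodule.Quotient.mk_eq_zero Z').1 ((hρ ⟨X, hXW⟩).symm.trans hρX)
  exact hinj X hXZ (LinearMap.ext fun Y ↦ by rw [← hωZ X hXZ Y, hX Y, LinearMap.zero_apply])

variable {g : Type*} [LieRing g] [LieAlgebra K g]
variable (K g) in
/-- A Lie algebra over a field is *symplectic* if it carries a closed nondegenerate alternating
form. This is the existence of an `IsSymplecticForm`, phrased with bundled bilinear forms and over
an arbitrary field. -/
def HasSymplecticForm : Prop :=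
  ∃ ω : LinearMap.BilinForm K g, ω.IsAlt ∧ ω.Nondegenerate ∧
    ∀ X Y Z : g, ω ⁅X, Y⁆ Z + ω ⁅Y, Z⁆ X + ω ⁅Z, X⁆ Y = 0

theorem hasSymplecticForm_of_pairing [FiniteDimensional K g] (hg : Even (finrank K g))
    {Z : Submodule K g} (hZ : ∀ X Y : g, ⁅X, Y⁆ ∈ Z) {φ : LinearMap.BilinForm K g}
    (hiso : ∀ z ∈ Z, ∀ z' ∈ Z, φ z z' = 0) (hinj : ∀ z ∈ Z, φ z = 0 → z = 0)
    (hcyc : ∀ X Y T : g, φ ⁅X, Y⁆ T + φ ⁅Y, T⁆ X + φ ⁅T, X⁆ Y = 0) :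
    HasSymplecticForm K g := by
  obtain ⟨ω, halt, hnd, hω⟩ := exists_isAlt_nondegenerate_extending hg hiso hinj
  refine ⟨ω, halt, hnd, fun X Y T ↦ ?_⟩
  simpa only [hω _ (hZ _ _)] using hcyc X Y T

/-! ### Brackets in frame coordinates -/

theorem dotProduct_crossProduct_cyclic {R : Type*} [CommRing R] (A : Matrix (Fin 3) (Fin 3) R)
    (u v w : Fin 3 → R) :
    (u ⨯₃ v) ⬝ᵥ A *ᵥ w + (v ⨯₃ w) ⬝ᵥ A *ᵥ u + (w ⨯₃ u) ⬝ᵥ A *ᵥ v = A.trace * (u ⬝ᵥ v ⨯₃ w) := by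
  simp only [cross_apply, dotProduct, mulVec, trace_fin_three, Fin.sum_univ_three, cons_val]
  ring

theorem mulVec_dotProduct_mulVec {R l m n : Type*} [CommSemiring R] [Fintype l] [Fintype m]
    [Fintype n] (M : Matrix l m R) (S : Matrix l n R) (u : m → R) (v : n → R) :
    M *ᵥ u ⬝ᵥ S *ᵥ v = u ⬝ᵥ (Mᵀ * S) *ᵥ v := by
  rw [← vecMul_transpose, ← dotProduct_mulVec, mulVec_mulVec]

variable (K) in
/-- Coordinates `(a, c, u, v)` standing for the element `a • x + c • w + τ u + ⁅x, τ v⁆` of a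
2-step nilpotent Lie algebra of dimension 8, where `ad x` has rank 3, `⁅x, w⁆ = 0`, and
`τ : K³ → g` followed by `ad x` is an isomorphism onto `⁅x, g⁆`. -/
abbrev FrameCoord : Type _ := K × K × (Fin 3 → K) × (Fin 3 → K)

/-- The bracket in the coordinates `FrameCoord K`. The matrix `L` is the action of `w`, namely
`⁅τ u, w⁆ = ⁅x, τ (L *ᵥ u)⁆`. The brackets `⁅τ u, τ u'⁆` form an alternating map in `(u, u')`, hence
are linear in `u ⨯₃ u'`; their components along `w` and in `⁅x, g⁆` are given by `κ` and `M`. -/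
def frameBracket (L M : Matrix (Fin 3) (Fin 3) K) (κ : Fin 3 → K) (p q : FrameCoord K) :
    FrameCoord K :=
  let (a, c, u, _) := p
  let (a', c', u', _) := q
  (0, κ ⬝ᵥ u ⨯₃ u', 0,
    a • u' - a' • u + (c' • L *ᵥ u - c • L *ᵥ u') + M *ᵥ (u ⨯₃ u'))

/-- The coordinates `e` turn the bracket of `g` into `frameBracket L M κ`. -/
def IsFrame (e : g ≃ₗ[K] FrameCoord K) (L M : Matrix (Fin 3) (Fin 3) K) (κ : Fin 3 → K) : Prop :=
  ∀ X Y : g, e ⁅X, Y⁆ = frameBracket L M κ (e X) (e Y)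

namespace IsFrame

variable {e : g ≃ₗ[K] FrameCoord K} {L M : Matrix (Fin 3) (Fin 3) K} {κ : Fin 3 → K}

theorem hasSymplecticForm_of_pairing (he : IsFrame e L M κ) {Z : Submodule K (FrameCoord K)}
    (hZ : ∀ p q, frameBracket L M κ p q ∈ Z) {φ : LinearMap.BilinForm K (FrameCoord K)}
    (hiso : ∀ z ∈ Z, ∀ z' ∈ Z, φ z z' = 0) (hinj : ∀ z ∈ Z, φ z = 0 → z = 0)
    (hcyc : ∀ p q r, φ (frameBracket L M κ p q) r + φ (frameBracket L M κ q r) p +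
      φ (frameBracket L M κ r p) q = 0) :
    HasSymplecticForm K g := by
  have : FiniteDimensional K g := e.symm.finiteDimensional
  have hg : finrank K g = 8 := by simp [e.finrank_eq]
  refine _root_.hasSymplecticForm_of_pairing (by grind) (Z := Z.comap e.toLinearMap)
    (φ := φ.compl₁₂ e.toLinearMap e.toLinearMap) (fun X Y ↦ ?_)
    (fun z hz z' hz' ↦ hiso _ hz _ hz') (fun z hz hφz ↦ ?_) fun X Y T ↦ ?_
  · simpa only [Submodule.mem_comap, LinearEquiv.coe_coe, he X Y] using hZ _ _
  · refine e.map_eq_zero_iff.1 (hinj _ hz (LinearMap.ext fun q ↦ ?_))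
    simpa using LinearMap.congr_fun hφz (e.symm q)
  · simpa only [LinearMap.compl₁₂_apply, LinearEquiv.coe_coe, he _ _] using hcyc _ _ _

-- The pairing is `φ(z, q) = z ⬝ᵥ (x • a - w • a ᵥ* L + S *ᵥ u)` for `z` in `⁅x, g⁆` and
-- `q = (x, w, u, _)`. Closedness splits into a part linear in `x`, which is `hS`, a part linear
-- in `w`, which is `hLS`, and a part free of both, which is `htr`.
theorem hasSymplecticForm_of_matrix (he : IsFrame e L M 0) (a : Fin 3 → K)
    (S : Matrix (Fin 3) (Fin 3) K)
    (hS : ∀ u v, u ⬝ᵥ S *ᵥ v - v ⬝ᵥ S *ᵥ u + M *ᵥ (u ⨯₃ v) ⬝ᵥ a = 0)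
    (hLS : ∀ u v, L *ᵥ u ⬝ᵥ S *ᵥ v - L *ᵥ v ⬝ᵥ S *ᵥ u + M *ᵥ (u ⨯₃ v) ⬝ᵥ (a ᵥ* L) = 0)
    (htr : (Mᵀ * S).trace = 0)
    (hinj : ∀ v, v ⬝ᵥ a = 0 → v ⬝ᵥ (a ᵥ* L) = 0 → v ᵥ* S = 0 → v = 0) :
    HasSymplecticForm K g := by
  let ψ (q : FrameCoord K) : Fin 3 → K := q.1 • a - q.2.1 • (a ᵥ* L) + S *ᵥ q.2.2.1
  let φ : LinearMap.BilinForm K (FrameCoord K) := LinearMap.mk₂ K (fun p q ↦ p.2.2.2 ⬝ᵥ ψ q)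
    (by simp [add_dotProduct]) (by simp)
    (fun _ q r ↦ by simp [ψ, dotProduct_add, dotProduct_sub, mulVec_add, add_smul]; ring)
    (fun t _ q ↦ by simp [ψ, dotProduct_add, dotProduct_sub, mulVec_smul, mul_assoc]; ring)
  have hφ (p q : FrameCoord K) : φ p q = p.2.2.2 ⬝ᵥ ψ q := rfl
  let Z : Submodule K (FrameCoord K) := .prod ⊥ (.prod ⊥ (.prod ⊥ ⊤))
  refine he.hasSymplecticForm_of_pairing (Z := Z) (φ := φ) (fun p q ↦ by simp [Z, frameBracket])
    ?_ ?_ fun p q r ↦ ?_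
  · rintro z - ⟨_, _, _, z'⟩ ⟨rfl, rfl, rfl, -⟩
    simp [hφ, ψ]
  · rintro ⟨_, _, _, z⟩ ⟨rfl, rfl, rfl, -⟩ hz
    have hφz (q : FrameCoord K) : z ⬝ᵥ ψ q = 0 := LinearMap.congr_fun hz q
    have hzS : z ᵥ* S = 0 := dotProduct_eq_zero _ fun u ↦ by
      simpa [ψ, dotProduct_mulVec] using hφz (0, 0, u, 0)
    simp [hinj z (by simpa [ψ] using hφz (1, 0, 0, 0)) (by simpa [ψ] using hφz (0, 1, 0, 0)) hzS]
  · obtain ⟨x₁, w₁, u, -⟩ := p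
    obtain ⟨x₂, w₂, v, -⟩ := q
    obtain ⟨x₃, w₃, w, -⟩ := r
    have hcyc := dotProduct_crossProduct_cyclic (Mᵀ * S) u v w
    rw [htr, ← mulVec_dotProduct_mulVec, ← mulVec_dotProduct_mulVec,
      ← mulVec_dotProduct_mulVec] at hcyc
    have haL (y : Fin 3 → K) : L *ᵥ y ⬝ᵥ a = y ⬝ᵥ (a ᵥ* L) := by
      rw [dotProduct_comm, dotProduct_mulVec, dotProduct_comm]
    simp only [hφ, ψ, frameBracket, add_dotProduct, sub_dotProduct, smul_dotProduct, smul_eq_mul,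
      dotProduct_add, dotProduct_sub, dotProduct_smul, haL]
    linear_combination x₁ * hS v w + x₂ * hS w u + x₃ * hS u v -
      w₁ * hLS v w - w₂ * hLS w u - w₃ * hLS u v + hcyc

theorem hasSymplecticForm_of_isSymm (he : IsFrame e L M 0) {S : Matrix (Fin 3) (Fin 3) K}
    (hS : S.IsSymm) (hLS : (Lᵀ * S).IsSymm) (htr : (Mᵀ * S).trace = 0) (hdet : S.det ≠ 0) :
    HasSymplecticForm K g := by
  have hsymm {A : Matrix (Fin 3) (Fin 3) K} (hA : A.IsSymm) (u v : Fin 3 → K) :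
      u ⬝ᵥ A *ᵥ v = v ⬝ᵥ A *ᵥ u := by
    rw [dotProduct_mulVec, dotProduct_comm, ← mulVec_transpose, hA.eq]
  refine he.hasSymplecticForm_of_matrix 0 S (fun u v ↦ ?_) (fun u v ↦ ?_) htr
    fun v _ _ hv ↦ eq_zero_of_vecMul_eq_zero hdet hv
  · rw [hsymm hS, sub_self, dotProduct_zero, add_zero]
  · rw [mulVec_dotProduct_mulVec, mulVec_dotProduct_mulVec, hsymm hLS, sub_self, zero_vecMul,
      dotProduct_zero, add_zero]

theorem hasSymplecticForm_of_ne_zero (he : IsFrame e 0 M κ) (hκ : κ ≠ 0) :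
    HasSymplecticForm K g := by
  let S : Matrix (Fin 3) (Fin 3) K := !![1, 0, 0; κ 2, 1, 0; -κ 1, κ 0, 1]
  obtain ⟨i, hi⟩ : ∃ i, κ i ≠ 0 := Function.ne_iff.1 hκ
  let t : Fin 3 → K := Pi.single i (-(Mᵀ * S).trace / κ i)
  have htr : (Mᵀ * S + vecMulVec κ t).trace = 0 := by
    rw [trace_add, trace_vecMulVec, dotProduct_single, mul_div_cancel₀ _ hi, add_neg_cancel]
  have hSκ (u v : Fin 3 → K) : u ⬝ᵥ S *ᵥ v - v ⬝ᵥ S *ᵥ u + κ ⬝ᵥ u ⨯₃ v = 0 := by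
    simp only [S, dotProduct, mulVec, cross_apply, Fin.sum_univ_three, of_apply, cons_val]
    ring
  let φ : LinearMap.BilinForm K (FrameCoord K) := LinearMap.mk₂ K
    (fun p q ↦ p.2.2.2 ⬝ᵥ S *ᵥ q.2.2.1 + p.2.1 * (q.1 + t ⬝ᵥ q.2.2.1))
    (fun _ _ _ ↦ by simp [add_dotProduct]; ring) (fun _ _ _ ↦ by simp; ring)
    (fun _ _ _ ↦ by simp [dotProduct_add, mulVec_add]; ring)
    (fun _ _ _ ↦ by simp [mulVec_smul]; ring)
  have hφ (p q : FrameCoord K) :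
    φ p q = p.2.2.2 ⬝ᵥ S *ᵥ q.2.2.1 + p.2.1 * (q.1 + t ⬝ᵥ q.2.2.1) := rfl
  let Z : Submodule K (FrameCoord K) := .prod ⊥ (.prod ⊤ (.prod ⊥ ⊤))
  refine he.hasSymplecticForm_of_pairing (Z := Z) (φ := φ) (fun p q ↦ by simp [Z, frameBracket])
    ?_ ?_ fun p q r ↦ ?_
  · rintro z - ⟨_, _, _, z'⟩ ⟨rfl, -, rfl, -⟩
    simp [hφ]
  · rintro ⟨_, c, _, z⟩ ⟨rfl, -, rfl, -⟩ hz
    have hφz (q : FrameCoord K) : φ (0, c, 0, z) q = 0 := LinearMap.congr_fun hz q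
    obtain rfl : c = 0 := by simpa [hφ] using hφz (1, 0, 0, 0)
    have hzS : z ᵥ* S = 0 := dotProduct_eq_zero _ fun u ↦ by
      simpa [hφ, dotProduct_mulVec] using hφz (0, 0, u, 0)
    simp [eq_zero_of_vecMul_eq_zero (M := S) (by simp [S, det_fin_three]) hzS]
  · obtain ⟨x₁, w₁, u, -⟩ := p
    obtain ⟨x₂, w₂, v, -⟩ := q
    obtain ⟨x₃, w₃, w, -⟩ := r
    have hcyc := dotProduct_crossProduct_cyclic (Mᵀ * S + vecMulVec κ t) u v w
    simp only [htr, add_mulVec, dotProduct_add, ← mulVec_dotProduct_mulVec, vecMulVec_mulVec,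
      op_smul_eq_smul, dotProduct_smul, smul_eq_mul, dotProduct_comm _ κ] at hcyc
    simp only [hφ, frameBracket, add_dotProduct, sub_dotProduct, smul_dotProduct, smul_eq_mul,
      zero_mulVec, zero_dotProduct]
    linear_combination x₁ * hSκ v w + x₂ * hSκ w u + x₃ * hSκ u v + hcyc

end IsFrame

/-! ### Normal forms of `3 × 3` matrices -/

section NormalForm

variable {V : Type*} [AddCommGroup V] [Module K V]

theorem toMatrix_eq_of_apply_basis {R W ι : Type*} [CommSemiring R] [AddCommMonoid W] [Module R W]
    [Fintype ι] [DecidableEq ι] {b : Basis ι R W} {f : W →ₗ[R] W} {A : Matrix ι ι R}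
    (h : ∀ j, f (b j) = ∑ i, A i j • b i) :
    LinearMap.toMatrix b b f = A := by
  rw [← LinearMap.toMatrix_toLin b b A]
  exact congrArg _ (b.ext fun j ↦ by rw [h, toLin_self])

theorem exists_basis_of_isUnit_det {R W ι : Type*} [CommRing R] [AddCommGroup W] [Module R W]
    [Fintype ι] [DecidableEq ι] (b : Basis ι R W) {A : Matrix ι ι R} (hA : IsUnit A.det) :
    ∃ b' : Basis ι R W, ∀ j, b' j = ∑ i, A i j • b i := by
  have hbasis := (Basis.is_basis_iff_det b (v := fun j ↦ ∑ i, A i j • b i)).2 (by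
    rw [Basis.det_apply]
    convert! hA
    ext i j
    simp [Basis.toMatrix_apply, Finsupp.single_apply])
  exact ⟨.mk hbasis.1 hbasis.2.ge, fun j ↦ by simp⟩

/-- Normal forms of a `3 × 3` matrix `L` up to conjugation and the substitutions `L ↦ c • (L - μ)`
with `c ≠ 0`. The latter reflect the freedom to replace `w` by `c • (w + μ • x)` in a frame. -/
inductive IsPencilNormalForm : Matrix (Fin 3) (Fin 3) K → Prop
  | zero : IsPencilNormalForm 0
  | companion (d₀ d₁ d₂ : K) : IsPencilNormalForm !![0, 0, d₀; 1, 0, d₁; 0, 1, d₂]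
  | nilpotent : IsPencilNormalForm !![0, 0, 0; 1, 0, 0; 0, 0, 0]
  | idempotent : IsPencilNormalForm !![0, 0, 0; 0, 0, 0; 0, 0, 1]

theorem exists_basis_companion (hV : finrank K V = 3) {f : V →ₗ[K] V} {v : V}
    (hv : LinearIndependent K ![v, f v, f (f v)]) :
    ∃ (b : Basis (Fin 3) K V) (d₀ d₁ d₂ : K),
      LinearMap.toMatrix b b f = !![0, 0, d₀; 1, 0, d₁; 0, 1, d₂] := by
  let b := basisOfLinearIndependentOfCardEqFinrank hv (by simp [hV])
  have hb : ⇑b = ![v, f v, f (f v)] := coe_basisOfLinearIndependentOfCardEqFinrank _ _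
  let d := b.repr (f (b 2))
  refine ⟨b, d 0, d 1, d 2, toMatrix_eq_of_apply_basis fun j ↦ ?_⟩
  fin_cases j
  · simp [hb, Fin.sum_univ_three]
  · simp [hb, Fin.sum_univ_three]
  · simpa [d, Fin.sum_univ_three, -Basis.sum_repr] using (b.sum_repr (f (b 2))).symm

theorem apply_basis_of_not_cyclic {b : Basis (Fin 3) K V} {f : V →ₗ[K] V} {γ : K}
    (hf : ∀ p, ¬ LinearIndependent K ![p, f p, f (f p)])
    (h₀ : f (b 0) = b 1) (h₂ : f (b 2) = γ • b 0) : (∃ β : K, f (b 1) = β • b 1) ∧ f (b 2) = 0 := by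
  have hdet {p : V} (A : Matrix (Fin 3) (Fin 3) K)
      (hA : ∀ j, ![p, f p, f (f p)] j = ∑ i, A i j • b i) : A.det = 0 := by
    by_contra hne
    obtain ⟨b', hb'⟩ := exists_basis_of_isUnit_det b (isUnit_iff_ne_zero.2 hne)
    exact hf p (funext (fun j ↦ (hb' j).trans (hA j).symm) ▸ b'.linearIndependent)
  let r := b.repr (f (b 1))
  have h₁ : f (b 1) = r 0 • b 0 + r 1 • b 1 + r 2 • b 2 := by
    simpa [r, -Basis.sum_repr, Fin.sum_univ_three] using (b.sum_repr (f (b 1))).symm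
  have hr₂ : r 2 = 0 := by
    simpa [det_fin_three] using hdet (p := b 0) !![1, 0, r 0; 0, 1, r 1; 0, 0, r 2] fun j ↦ by
      fin_cases j <;> simp [h₀, h₁, Fin.sum_univ_three]
  have hγ : γ = 0 := by
    simpa [det_fin_three] using hdet (p := b 2) !![0, γ, 0; 0, 0, γ; 1, 0, 0] fun j ↦ by
      fin_cases j <;> simp [h₀, h₂, Fin.sum_univ_three]
  have hr₀ : r 0 = 0 := by
    simpa [det_fin_three] using hdet (p := b 0 + b 2) !![1, 0, r 0; 0, 1, r 1; 1, 0, 0] fun j ↦ by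
      fin_cases j <;> simp [h₀, h₁, h₂, hγ, hr₂, Fin.sum_univ_three]
  exact ⟨⟨r 1, by simp [h₁, hr₀, hr₂]⟩, by simp [h₂, hγ]⟩

theorem exists_basis_of_not_cyclic (hV : finrank K V = 3) {f : V →ₗ[K] V}
    (hf : ∀ (μ : K) (p : V),
      ¬ LinearIndependent K ![p, (f - μ • 1) p, (f - μ • 1) ((f - μ • 1) p)])
    {v : V} (hv : LinearIndependent K ![v, f v]) :
    ∃ (μ β : K) (b : Basis (Fin 3) K V), (f - μ • 1) (b 0) = b 1 ∧ (f - μ • 1) (b 1) = β • b 1 ∧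
      (f - μ • 1) (b 2) = 0 := by
  have : FiniteDimensional K V := .of_finrank_pos (by simp [hV])
  obtain ⟨u, hu⟩ := exists_linearIndependent_cons_of_lt_finrank hv (by simp [hV])
  let b' := basisOfLinearIndependentOfCardEqFinrank hu (by simp [hV])
  have hb' : ⇑b' = ![u, v, f v] := coe_basisOfLinearIndependentOfCardEqFinrank _ _
  let x := b'.repr (f u)
  have hfu : f u = x 0 • u + x 1 • v + x 2 • f v := by
    simpa [x, hb', -Basis.sum_repr, Fin.sum_univ_three] using (b'.sum_repr (f u)).symm
  obtain ⟨b, hb⟩ := exists_basis_of_isUnit_det b' (A := !![0, 0, 1; 1, -x 0, -x 2; 0, 1, 0])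
    (by simp [det_fin_three])
  have hb₀ : b 0 = v := by simp [hb, hb', Fin.sum_univ_three]
  have hb₁ : b 1 = f v - x 0 • v := by
    rw [hb, hb', Fin.sum_univ_three]
    simp only [of_apply, cons_val]
    module
  have hb₂ : b 2 = u - x 2 • v := by
    rw [hb, hb', Fin.sum_univ_three]
    simp only [of_apply, cons_val]
    module
  have h₀ : (f - x 0 • 1) (b 0) = b 1 := by simp [hb₀, hb₁]
  have h₂ : (f - x 0 • 1) (b 2) = (x 1 + x 0 * x 2) • b 0 := by
    simp only [hb₀, hb₂, LinearMap.sub_apply, LinearMap.smul_apply, Module.End.one_apply, map_sub,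
      map_smul, hfu]
    module
  obtain ⟨⟨β, h₁⟩, h₂⟩ := apply_basis_of_not_cyclic (hf (x 0)) h₀ h₂
  exact ⟨x 0, β, b, h₀, h₁, h₂⟩

theorem exists_basis_isPencilNormalForm (hV : finrank K V = 3) (f : V →ₗ[K] V) :
    ∃ (c μ : K) (b : Basis (Fin 3) K V), c ≠ 0 ∧
      IsPencilNormalForm (LinearMap.toMatrix b b (c • (f - μ • 1))) := by
  by_cases hcyc : ∃ (μ : K) (p : V),
    LinearIndependent K ![p, (f - μ • 1) p, (f - μ • 1) ((f - μ • 1) p)]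
  · obtain ⟨μ, p, hp⟩ := hcyc
    obtain ⟨b, d₀, d₁, d₂, hb⟩ := exists_basis_companion hV hp
    exact ⟨1, μ, b, one_ne_zero, by rw [one_smul, hb]; exact .companion d₀ d₁ d₂⟩
  by_cases hscal : ∃ v, LinearIndependent K ![v, f v]
  swap
  · obtain ⟨μ, hμ⟩ := f.exists_eq_smul_id_of_forall_notLinearIndependent (by simpa using hscal)
    have : FiniteDimensional K V := .of_finrank_pos (by simp [hV])
    exact ⟨1, μ, finBasisOfFinrankEq K V hV, one_ne_zero, by
      simpa [hμ, Module.End.one_eq_id] using IsPencilNormalForm.zero⟩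
  obtain ⟨v, hv⟩ := hscal
  obtain ⟨μ, β, b, h₀, h₁, h₂⟩ := exists_basis_of_not_cyclic hV (by simpa using hcyc) hv
  generalize hN : f - μ • 1 = N at h₀ h₁ h₂
  obtain rfl | hβ := eq_or_ne β 0
  · refine ⟨1, μ, b, one_ne_zero, ?_⟩
    rw [hN, one_smul, toMatrix_eq_of_apply_basis (A := !![0, 0, 0; 1, 0, 0; 0, 0, 0]) fun j ↦ ?_]
    · exact .nilpotent
    · fin_cases j <;> simp [h₀, h₁, h₂, Fin.sum_univ_three]
  · obtain ⟨b', hb'⟩ := exists_basis_of_isUnit_det b (A := !![1, 0, 0; -β⁻¹, 0, 1; 0, 1, 0])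
      (by simp [det_fin_three])
    refine ⟨β⁻¹, μ, b', inv_ne_zero hβ, ?_⟩
    rw [hN, toMatrix_eq_of_apply_basis (A := !![0, 0, 0; 0, 0, 0; 0, 0, 1]) fun j ↦ ?_]
    · exact .idempotent
    · fin_cases j <;> simp [hb', h₀, h₁, h₂, hβ, smul_smul, Fin.sum_univ_three]

end NormalForm

/-! ### Symplectic forms for each normal form -/

theorem isSymm_fin_three_iff {R : Type*} {A : Matrix (Fin 3) (Fin 3) R} :
    A.IsSymm ↔ A 0 1 = A 1 0 ∧ A 0 2 = A 2 0 ∧ A 1 2 = A 2 1 := by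
  simp only [IsSymm.ext_iff, Fin.forall_fin_succ, Fin.forall_fin_zero]
  grind

theorem trace_transpose_mul_eq_sum {R m n : Type*} [NonUnitalNonAssocSemiring R] [Fintype m]
    [Fintype n] (A B : Matrix m n R) : (Aᵀ * B).trace = ∑ i, ∑ j, A i j * B i j := by
  simp only [trace, diag_apply, mul_apply, transpose_apply]
  exact Finset.sum_comm

theorem exists_isSymm_trace_transpose_mul_eq_zero (M : Matrix (Fin 3) (Fin 3) K) :
    ∃ S : Matrix (Fin 3) (Fin 3) K, S.IsSymm ∧ (Mᵀ * S).trace = 0 ∧ S.det ≠ 0 := by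
  simp only [isSymm_fin_three_iff, trace_transpose_mul_eq_sum, Fin.sum_univ_three]
  by_cases h₀ : M 0 0 = 0
  swap
  · refine ⟨!![-(M 0 2 + M 1 1 + M 2 0) / M 0 0, 0, 1; 0, 1, 0; 1, 0, 0], by simp, ?_, by
      simp [det_fin_three]⟩
    simp only [of_apply, cons_val, mul_div_cancel₀ _ h₀]
    ring
  by_cases h₁ : M 1 1 = 0
  swap
  · refine ⟨!![0, 1, 0; 1, -(M 0 1 + M 1 0 + M 2 2) / M 1 1, 0; 0, 0, 1], by simp, ?_, by
      simp [det_fin_three]⟩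
    simp only [of_apply, cons_val, mul_div_cancel₀ _ h₁]
    ring
  by_cases h₂ : M 2 2 = 0
  swap
  · refine ⟨!![1, 0, 0; 0, 0, 1; 0, 1, -(M 0 0 + M 1 2 + M 2 1) / M 2 2], by simp, ?_, by
      simp [det_fin_three]⟩
    simp only [of_apply, cons_val, mul_div_cancel₀ _ h₂]
    ring
  exact ⟨1, by simp, by simp [h₀, h₁, h₂], by simp⟩

namespace IsFrame

variable {e : g ≃ₗ[K] FrameCoord K} {L M : Matrix (Fin 3) (Fin 3) K} {κ : Fin 3 → K}

theorem hasSymplecticForm_of_zero (he : IsFrame e 0 M 0) : HasSymplecticForm K g := by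
  obtain ⟨S, hS, htr, hdet⟩ := exists_isSymm_trace_transpose_mul_eq_zero M
  exact he.hasSymplecticForm_of_isSymm hS (by simp) htr hdet

theorem hasSymplecticForm_of_companion {d₀ d₁ d₂ : K}
    (he : IsFrame e !![0, 0, d₀; 1, 0, d₁; 0, 1, d₂] M 0) : HasSymplecticForm K g := by
  -- For `a = 0` the first two equations of `hasSymplecticForm_of_matrix` are solved by `S₀`, for
  -- `a = (0, 0, 1)` by `S₁`; a multiple of `S₀` then corrects the trace of `S₁`.
  let S₀ : Matrix (Fin 3) (Fin 3) K := !![0, 0, 1; 0, 1, d₂; 1, d₂, d₁ + d₂ ^ 2]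
  by_cases hS₀ : (Mᵀ * S₀).trace = 0
  · refine he.hasSymplecticForm_of_isSymm (S := S₀) ?_ ?_ hS₀ (by simp [S₀, det_fin_three])
    · simp [S₀, isSymm_fin_three_iff]
    · simp only [S₀, isSymm_fin_three_iff, mul_apply, transpose_apply, Fin.sum_univ_three, of_apply,
        cons_val]
      constructorm* _ ∧ _ <;> ring
  let s₂₂ := -M 2 1 - M 1 2 - d₂ * M 2 2
  let s₂₃ := d₀ + d₁ * M 2 2 + M 1 1
  let s₃₂ := s₂₃ + M 2 0
  let S₁ : Matrix (Fin 3) (Fin 3) K :=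
    !![1, 0, 0; M 2 2, s₂₂, s₂₃; -M 2 1, s₃₂, d₁ * s₂₂ + d₂ * s₃₂ - M 1 0 - d₂ * M 2 0]
  let r := (Mᵀ * S₁).trace / (Mᵀ * S₀).trace
  refine he.hasSymplecticForm_of_matrix ![0, 0, 1] (S₁ - r • S₀) (fun u v ↦ ?_) (fun u v ↦ ?_) ?_
    fun v hva hvaL hvS ↦ ?_
  · simp only [S₀, S₁, dotProduct, mulVec, cross_apply, Fin.sum_univ_three, of_apply, cons_val,
      Matrix.smul_apply, Matrix.sub_apply, smul_eq_mul, s₃₂]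
    ring
  · simp only [S₀, S₁, dotProduct, mulVec, vecMul, cross_apply, Fin.sum_univ_three, of_apply,
      cons_val, Matrix.smul_apply, Matrix.sub_apply, smul_eq_mul, s₃₂, s₂₂, s₂₃]
    ring
  · rw [Matrix.mul_sub, Matrix.mul_smul, trace_sub, trace_smul, smul_eq_mul,
      div_mul_cancel₀ _ hS₀, sub_self]
  · have h₂ : v 2 = 0 := by simpa [dotProduct, Fin.sum_univ_three] using hva
    have h₁ : v 1 = 0 := by simpa [dotProduct, vecMul, Fin.sum_univ_three, h₂] using hvaL
    have h₀ : v 0 = 0 := by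
      simpa [dotProduct, vecMul, Fin.sum_univ_three, S₀, S₁, h₁, h₂] using congrFun hvS 0
    ext i
    fin_cases i
    exacts [h₀, h₁, h₂]

theorem hasSymplecticForm_of_nilpotent_of_ne_zero
    (he : IsFrame e !![0, 0, 0; 1, 0, 0; 0, 0, 0] M 0) (hM : M 2 2 ≠ 0) :
    HasSymplecticForm K g := by
  let t := M 0 1 * (1 - M 2 2) + M 0 2 + M 1 0 + M 2 0
  refine he.hasSymplecticForm_of_matrix ![0, 0, 1]
    !![0, 1 - M 2 2, 1; 1, 0, 0; 1 - M 2 1, M 2 0, -t / M 2 2]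
    (fun u v ↦ ?_) (fun u v ↦ ?_) ?_ fun v hva _ hvS ↦ ?_
  · simp only [dotProduct, mulVec, cross_apply, Fin.sum_univ_three, of_apply, cons_val]
    ring
  · simp only [dotProduct, mulVec, vecMul, cross_apply, Fin.sum_univ_three, of_apply, cons_val]
    ring
  · simp only [trace_transpose_mul_eq_sum, Fin.sum_univ_three, of_apply, cons_val,
      mul_div_cancel₀ _ hM, t]
    ring
  · have h₂ : v 2 = 0 := by simpa [dotProduct, Fin.sum_univ_three] using hva
    have h₁ : v 1 = 0 := by
      simpa [dotProduct, vecMul, Fin.sum_univ_three, h₂] using congrFun hvS 0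
    have h₀ : v 0 = 0 := by
      simpa [dotProduct, vecMul, Fin.sum_univ_three, h₂] using congrFun hvS 2
    ext i
    fin_cases i
    exacts [h₀, h₁, h₂]

theorem hasSymplecticForm_of_nilpotent (he : IsFrame e !![0, 0, 0; 1, 0, 0; 0, 0, 0] M 0) :
    HasSymplecticForm K g := by
  by_cases h₂₂ : M 2 2 = 0
  swap
  · exact he.hasSymplecticForm_of_nilpotent_of_ne_zero h₂₂
  have symmetric (p r : K) (h : p * M 0 0 + (M 0 1 + M 1 0) + r * (M 0 2 + M 2 0) = 0) :
      HasSymplecticForm K g := by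
    refine he.hasSymplecticForm_of_isSymm (S := !![p, 1, r; 1, 0, 0; r, 0, 1]) ?_ ?_ ?_ ?_
    · simp [isSymm_fin_three_iff]
    · simp [isSymm_fin_three_iff, mul_apply, Fin.sum_univ_three]
    · simp only [trace_transpose_mul_eq_sum, Fin.sum_univ_three, of_apply, cons_val, h₂₂]
      linear_combination h
    · simp [det_fin_three]
  by_cases h₀₀ : M 0 0 = 0
  swap
  · exact symmetric (-(M 0 1 + M 1 0) / M 0 0) 0 (by simp [div_mul_cancel₀ _ h₀₀])
  by_cases h₀₂ : M 0 2 + M 2 0 = 0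
  swap
  · exact symmetric 0 (-(M 0 1 + M 1 0) / (M 0 2 + M 2 0)) (by simp [div_mul_cancel₀ _ h₀₂])
  by_cases h₀₁ : M 0 1 + M 1 0 = 0
  · exact symmetric 0 0 (by simp [h₀₁])
  refine he.hasSymplecticForm_of_matrix ![0, 1, 0]
    !![0, -(M 1 2 + M 2 1), 0; -M 2 1, -M 0 2, M 0 1; -M 1 1, M 0 1 + M 1 0, 0]
    (fun u v ↦ ?_) (fun u v ↦ ?_) ?_ fun v hva hvaL hvS ↦ ?_
  · simp only [dotProduct, mulVec, cross_apply, Fin.sum_univ_three, of_apply, cons_val]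
    ring
  · simp only [dotProduct, mulVec, vecMul, cross_apply, Fin.sum_univ_three, of_apply, cons_val]
    linear_combination (u 1 * v 2 - u 2 * v 1) * h₀₀
  · simp only [trace_transpose_mul_eq_sum, Fin.sum_univ_three, of_apply, cons_val]
    linear_combination -M 1 1 * h₀₂
  · have h₁ : v 1 = 0 := by simpa [dotProduct, Fin.sum_univ_three] using hva
    have h₀ : v 0 = 0 := by simpa [dotProduct, vecMul, Fin.sum_univ_three] using hvaL
    have h₂ : v 2 = 0 := by
      simpa [dotProduct, vecMul, Fin.sum_univ_three, h₀, h₁, h₀₁] using congrFun hvS 1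
    ext i
    fin_cases i
    exacts [h₀, h₁, h₂]

theorem hasSymplecticForm_of_idempotent (he : IsFrame e !![0, 0, 0; 0, 0, 0; 0, 0, 1] M 0)
    (hM : M 0 0 = 0 → M 1 1 = 0 → M 0 1 + M 1 0 = 0 → M 2 2 = 0) : HasSymplecticForm K g := by
  have symmetric (p q r : K)
      (h : p * M 0 0 + q * (M 0 1 + M 1 0) + r * M 1 1 + M 2 2 = 0) (hdet : p * r - q * q ≠ 0) :
      HasSymplecticForm K g := by
    refine he.hasSymplecticForm_of_isSymm (S := !![p, q, 0; q, r, 0; 0, 0, 1]) ?_ ?_ ?_ ?_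
    · simp [isSymm_fin_three_iff]
    · simp [isSymm_fin_three_iff, mul_apply, Fin.sum_univ_three]
    · simp only [trace_transpose_mul_eq_sum, Fin.sum_univ_three, of_apply, cons_val]
      linear_combination h
    · simpa [det_fin_three] using hdet
  by_cases h₀₀ : M 0 0 = 0
  swap
  · exact symmetric (-(M 0 1 + M 1 0 + M 2 2) / M 0 0) 1 0
      (by simp [div_mul_cancel₀ _ h₀₀]; ring) (by simp)
  by_cases h₁₁ : M 1 1 = 0
  swap
  · exact symmetric 0 1 (-(M 0 1 + M 1 0 + M 2 2) / M 1 1)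
      (by simp [h₀₀, div_mul_cancel₀ _ h₁₁]; ring) (by simp)
  by_cases h₀₁ : M 0 1 + M 1 0 = 0
  · exact symmetric 1 0 1 (by simp [h₀₀, h₁₁, h₀₁, hM h₀₀ h₁₁ h₀₁]) (by simp)
  · let q := -M 2 2 / (M 0 1 + M 1 0)
    exact symmetric 1 q (q * q + 1) (by simp [h₀₀, h₁₁, q, div_mul_cancel₀ _ h₀₁]) (by simp)

end IsFrame

/-! ### The non-symplectic algebra -/

/-- The bracket of `NonSympl8`, over an arbitrary field. -/
def exceptionalBracket (X Y : Fin 8 → K) : Fin 8 → K :=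
  ![0, 0, X 0 * Y 1 - Y 0 * X 1, 0, X 0 * Y 3 - Y 0 * X 3, 0,
    X 0 * Y 5 - Y 0 * X 5 + (X 1 * Y 3 - Y 1 * X 3) + (X 5 * Y 7 - Y 5 * X 7), 0]

variable (K g) in
/-- The Lie algebra `g` is isomorphic to the algebra of `NonSympl8`, over an arbitrary field. -/
def IsExceptional : Prop :=
  ∃ e : g ≃ₗ[K] (Fin 8 → K), ∀ X Y : g, e ⁅X, Y⁆ = exceptionalBracket (e X) (e Y)

theorem IsFrame.isExceptional {e : g ≃ₗ[K] FrameCoord K} {M : Matrix (Fin 3) (Fin 3) K}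
    (he : IsFrame e !![0, 0, 0; 0, 0, 0; 0, 0, 1] M 0) (h₀₀ : M 0 0 = 0) (h₁₁ : M 1 1 = 0)
    (h₀₁ : M 0 1 + M 1 0 = 0) (h₂₂ : M 2 2 ≠ 0) : IsExceptional K g := by
  let A : FrameCoord K →ₗ[K] Fin 8 → K :=
    { toFun := fun (a, c, u, v) ↦ ![a + M 1 2 * u 0 - M 0 2 * u 1 + M 0 1 * u 2, M 2 2 * u 0,
        M 2 2 * v 0, u 1, v 1, u 2, v 2, c + (M 1 2 + M 2 1) * u 0 - (M 0 2 + M 2 0) * u 1]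
      map_add' := fun p q ↦ by ext i; fin_cases i <;> simp <;> ring
      map_smul' := fun t p ↦ by ext i; fin_cases i <;> simp <;> ring }
  have hAinj : Function.Injective A := (injective_iff_map_eq_zero _).2 fun ⟨a, c, u, v⟩ h ↦ by
    simp only [A, LinearMap.coe_mk, AddHom.coe_mk, cons_eq_zero_iff, mul_eq_zero, h₂₂,
      false_or] at h
    obtain ⟨ha, hu₀, hv₀, hu₁, hv₁, hu₂, hv₂, hc, -⟩ := h
    simp_all [funext_iff, Fin.forall_fin_succ]
  have hAbracket (p q : FrameCoord K) : A (frameBracket !![0, 0, 0; 0, 0, 0; 0, 0, 1] M 0 p q) =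
      exceptionalBracket (A p) (A q) := by
    obtain ⟨a, c, u, v⟩ := p
    obtain ⟨a', c', u', v'⟩ := q
    have h₁₀ : M 1 0 = -M 0 1 := by linear_combination h₀₁
    simp only [A, exceptionalBracket, frameBracket, LinearMap.coe_mk, AddHom.coe_mk, cross_apply,
      mulVec, dotProduct, Fin.sum_univ_three, Pi.add_apply, Pi.sub_apply, Pi.smul_apply,
      Pi.zero_apply, smul_eq_mul, of_apply, cons_val, vecCons_inj, true_and, and_true, h₀₀,
      h₁₁, h₁₀]
    constructorm* _ ∧ _ <;> ring
  exact ⟨e ≪≫ₗ A.linearEquivOfInjective hAinj (by simp), fun X Y ↦ by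
    simpa [he X Y] using hAbracket (e X) (e Y)⟩

-- Closedness on `(X₂, X₄, X₆)` and `(X₂, X₄, X₈)` gives `ω X₇ X₆ = ω X₇ X₈ = 0`, and closedness on
-- `(X₆, X₈, Y)` then puts `X₇ = ⁅X₆, X₈⁆` in the radical.
theorem IsExceptional.not_hasSymplecticForm (hg : IsExceptional K g) :
    ¬ HasSymplecticForm K g := by
  rintro ⟨ω, -, hnd, hclosed⟩
  obtain ⟨e, he⟩ := hg
  let E (i : Fin 8) : g := e.symm (Pi.single i 1)
  have h₁₃ : ⁅E 1, E 3⁆ = E 6 := e.injective <| by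
    ext i; fin_cases i <;> simp [he, E, exceptionalBracket]
  have h₅₇ : ⁅E 5, E 7⁆ = E 6 := e.injective <| by
    ext i; fin_cases i <;> simp [he, E, exceptionalBracket]
  have hcomm {i j : Fin 8} (hi : i = 1 ∨ i = 3) (hj : j = 5 ∨ j = 7) : ⁅E i, E j⁆ = 0 :=
    e.injective <| by
      ext k
      rcases hi with rfl | rfl <;> rcases hj with rfl | rfl <;> fin_cases k <;>
        simp [he, E, exceptionalBracket]
  have hω {j : Fin 8} (hj : j = 5 ∨ j = 7) : ω (E 6) (E j) = 0 := by
    have hj₁ : ⁅E j, E 1⁆ = 0 := by rw [← lie_skew, hcomm (.inl rfl) hj, neg_zero]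
    simpa [h₁₃, hcomm (.inr rfl) hj, hj₁] using hclosed (E 1) (E 3) (E j)
  have hE₇ (Y : g) : ⁅E 7, Y⁆ = -e Y 5 • E 6 := e.injective <| by
    ext i; fin_cases i <;> simp [he, E, exceptionalBracket]
  have hE₅ (Y : g) : ⁅Y, E 5⁆ = e Y 0 • E 6 - e Y 7 • E 6 := e.injective <| by
    ext i; fin_cases i <;> simp [he, E, exceptionalBracket, sub_eq_add_neg]
  have hE₆ : E 6 = 0 := hnd.1 _ fun Y ↦ by
    simpa [h₅₇, hE₇, hE₅, hω] using hclosed (E 5) (E 7) Y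
  simpa [E] using congrFun (congrArg e hE₆) 6

/-! ### Existence of frames -/

theorem exists_eq_apply_crossProduct {R W : Type*} [CommRing R] [AddCommGroup W] [Module R W]
    (f : (Fin 3 → R) →ₗ[R] (Fin 3 → R) →ₗ[R] W) (hf : f.IsAlt) :
    ∃ N : (Fin 3 → R) →ₗ[R] W, ∀ u v, f u v = N (u ⨯₃ v) := by
  let E (i : Fin 3) : Fin 3 → R := Pi.single i 1
  have hE (u : Fin 3 → R) : u = u 0 • E 0 + u 1 • E 1 + u 2 • E 2 := by
    ext i
    fin_cases i <;> simp [E]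
  refine ⟨Fintype.linearCombination R ![f (E 1) (E 2), f (E 2) (E 0), f (E 0) (E 1)],
    fun u v ↦ ?_⟩
  conv_lhs => rw [hE u, hE v]
  simp only [map_add, map_smul, LinearMap.add_apply, LinearMap.smul_apply, hf _,
    ← hf.neg (E 0) (E 1), ← hf.neg (E 1) (E 2), ← hf.neg (E 2) (E 0), cross_apply,
    Fintype.linearCombination_apply, Fin.sum_univ_three, cons_val]
  module

section Frames

variable {x w : g}

theorem lie_eq_zero_of_mem_range_ad (h2 : ∀ X Y Z : g, ⁅⁅X, Y⁆, Z⁆ = 0) {r : g}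
    (hr : r ∈ (LieAlgebra.ad K g x).range) (Y : g) : ⁅Y, r⁆ = 0 := by
  obtain ⟨X, rfl⟩ := hr
  rw [← lie_skew, LieAlgebra.ad_apply, h2, neg_zero]

theorem notMem_range_ad_self (h2 : ∀ X Y Z : g, ⁅⁅X, Y⁆, Z⁆ = 0)
    (hx : LieAlgebra.ad K g x ≠ 0) : x ∉ (LieAlgebra.ad K g x).range := fun hxx ↦
  hx <| LinearMap.ext fun Y ↦ by
    rw [LieAlgebra.ad_apply, ← lie_skew, lie_eq_zero_of_mem_range_ad h2 hxx, neg_zero,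
      LinearMap.zero_apply]

theorem exists_linearEquiv_symm_apply_eq {V : Type*} [AddCommGroup V] [Module K V]
    [FiniteDimensional K V] (h2 : ∀ X Y Z : g, ⁅⁅X, Y⁆, Z⁆ = 0)
    (hdim : finrank K g = 2 + 2 * finrank K V) (hx : LieAlgebra.ad K g x ≠ 0) (hw : ⁅x, w⁆ = 0)
    (hwx : w ∉ K ∙ x ⊔ (LieAlgebra.ad K g x).range) {τ : V →ₗ[K] g}
    (hτ : ∀ u, ⁅x, τ u⁆ = 0 → u = 0) :
    ∃ e : g ≃ₗ[K] K × K × V × V, ∀ a c u v,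
      e.symm (a, c, u, v) = a • x + c • w + τ u + ⁅x, τ v⁆ := by
  have : FiniteDimensional K g := .of_finrank_pos (by simp [hdim])
  let A : (K × K × V × V) →ₗ[K] g :=
    (LinearMap.toSpanSingleton K g x).coprod <| (LinearMap.toSpanSingleton K g w).coprod <|
      τ.coprod (LieAlgebra.ad K g x ∘ₗ τ)
  have hA (a c : K) (u v : V) : A (a, c, u, v) = a • x + c • w + τ u + ⁅x, τ v⁆ := by
    simp [A, add_assoc]
  have hmem (v : V) : ⁅x, τ v⁆ ∈ (LieAlgebra.ad K g x).range := ⟨τ v, rfl⟩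
  have hAinj : Function.Injective A := (injective_iff_map_eq_zero _).2 fun ⟨a, c, u, v⟩ h ↦ by
    rw [hA] at h
    obtain rfl : u = 0 := hτ u <| by
      simpa [hw, lie_eq_zero_of_mem_range_ad h2 (hmem v)] using congrArg (⁅x, ·⁆) h
    rw [map_zero, add_zero, add_right_comm] at h
    obtain rfl : c = 0 := by
      by_contra hc
      refine hwx ((Submodule.smul_mem_iff _ hc).1 (eq_neg_of_add_eq_zero_right h ▸ neg_mem ?_))
      exact Submodule.add_mem_sup (Submodule.smul_mem _ a (Submodule.mem_span_singleton_self x))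
        (hmem v)
    rw [zero_smul, add_zero] at h
    obtain rfl : a = 0 := by
      by_contra ha
      exact notMem_range_ad_self h2 hx
        ((Submodule.smul_mem_iff _ ha).1 (eq_neg_of_add_eq_zero_left h ▸ neg_mem (hmem v)))
    rw [zero_smul, zero_add] at h
    simp [hτ v h]
  exact ⟨(A.linearEquivOfInjective hAinj (by simp [hdim]; ring)).symm, hA⟩

theorem exists_isFrame_of_symm_apply_eq (h2 : ∀ X Y Z : g, ⁅⁅X, Y⁆, Z⁆ = 0) (hw : ⁅x, w⁆ = 0)
    {τ : (Fin 3 → K) →ₗ[K] g} {e : g ≃ₗ[K] FrameCoord K}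
    (he : ∀ a c u v, e.symm (a, c, u, v) = a • x + c • w + τ u + ⁅x, τ v⁆)
    {L : Matrix (Fin 3) (Fin 3) K} (hL : ∀ u, ⁅τ u, w⁆ = ⁅x, τ (L *ᵥ u)⁆)
    (hder : ∀ u v, ∃ (c : K) (y : _), ⁅τ u, τ v⁆ = c • w + ⁅x, τ y⁆) :
    ∃ M κ, IsFrame e L M κ := by
  obtain ⟨N, hN⟩ := exists_eq_apply_crossProduct
    (((LieAlgebra.ad K g : g →ₗ[K] Module.End K g).compl₁₂ τ τ).compr₂ e.toLinearMap)
    fun u ↦ by simp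
  replace hN (u v : Fin 3 → K) : e ⁅τ u, τ v⁆ = N (u ⨯₃ v) := hN u v
  let M := LinearMap.toMatrix' (.snd K _ _ ∘ₗ .snd K _ _ ∘ₗ .snd K _ _ ∘ₗ N)
  let κ := (dotProductEquiv K (Fin 3)).symm (.fst K _ _ ∘ₗ .snd K _ _ ∘ₗ N)
  have hM (y : Fin 3 → K) : M *ᵥ y = (N y).2.2.2 := LinearMap.toMatrix'_mulVec _ _
  have hκ (y : Fin 3 → K) : κ ⬝ᵥ y = (N y).2.1 :=
    LinearMap.congr_fun ((dotProductEquiv K (Fin 3)).apply_symm_apply _) y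
  have hcross (u v : Fin 3 → K) : e ⁅τ u, τ v⁆ = (0, κ ⬝ᵥ u ⨯₃ v, 0, M *ᵥ (u ⨯₃ v)) := by
    obtain ⟨c, y, hcy⟩ := hder u v
    have hcoord : e ⁅τ u, τ v⁆ = (0, c, 0, y) := by
      rw [← LinearEquiv.eq_symm_apply, he, hcy, zero_smul, map_zero, add_zero, zero_add]
    rw [hM, hκ, ← hN, hcoord]
  have hcentral (v : Fin 3 → K) (Y : g) : ⁅Y, ⁅x, τ v⁆⁆ = 0 :=
    lie_eq_zero_of_mem_range_ad (K := K) h2 ⟨τ v, rfl⟩ Y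
  have hwx : ⁅w, x⁆ = 0 := by rw [← lie_skew, hw, neg_zero]
  have hτx (u : Fin 3 → K) : ⁅τ u, x⁆ = -⁅x, τ u⁆ := (lie_skew _ _).symm
  have hwτ (u : Fin 3 → K) : ⁅w, τ u⁆ = -⁅x, τ (L *ᵥ u)⁆ := by rw [← lie_skew, hL]
  refine ⟨M, κ, fun X Y ↦ ?_⟩
  obtain ⟨⟨a, c, u, v⟩, rfl⟩ := e.symm.surjective X
  obtain ⟨⟨a', c', u', v'⟩, rfl⟩ := e.symm.surjective Y
  have hbracket : ⁅e.symm (a, c, u, v), e.symm (a', c', u', v')⁆ =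
      e.symm (0, 0, 0, a • u' - a' • u + (c' • L *ᵥ u - c • L *ᵥ u')) + ⁅τ u, τ u'⁆ := by
    simp only [he, lie_add, add_lie, lie_smul, smul_lie, hcentral, h2, hw, hwx, hL, hτx, hwτ,
      lie_self, map_zero, map_add, map_sub, map_smul, lie_sub]
    module
  rw [hbracket, map_add, hcross]
  simp [frameBracket]

variable (K x) in
theorem exists_section_ad : ∃ σ : (LieAlgebra.ad K g x).range →ₗ[K] g, ∀ r, ⁅x, σ r⁆ = r := by
  obtain ⟨σ, hσ⟩ := (LieAlgebra.ad K g x).rangeRestrict.exists_rightInverse_of_surjective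
    (LieAlgebra.ad K g x).range_rangeRestrict
  exact ⟨σ, fun r ↦ congrArg Subtype.val (LinearMap.congr_fun hσ r)⟩

theorem exists_mem_ker_ad_notMem_sup [FiniteDimensional K g]
    (hdim : 2 * finrank K (LieAlgebra.ad K g x).range + 1 < finrank K g) :
    ∃ w, ⁅x, w⁆ = 0 ∧ w ∉ K ∙ x ⊔ (LieAlgebra.ad K g x).range := by
  by_contra! hker
  have hle : (LieAlgebra.ad K g x).ker ≤ K ∙ x ⊔ (LieAlgebra.ad K g x).range := hker
  have hx : finrank K (K ∙ x) ≤ 1 := by simpa using finrank_span_le_card (R := K) {x}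
  have hsup := Submodule.finrank_add_le_finrank_add_finrank (K ∙ x) (LieAlgebra.ad K g x).range
  have hrank := (LieAlgebra.ad K g x).finrank_range_add_finrank_ker
  have := Submodule.finrank_mono hle
  lia

namespace IsFrame

variable {e : g ≃ₗ[K] FrameCoord K} {L M : Matrix (Fin 3) (Fin 3) K} {κ : Fin 3 → K}

theorem apply_eq_zero_of_mem_range_ad (he : IsFrame e L M κ) (hx : e x = (1, 0, 0, 0)) {Z : g}
    (hZ : Z ∈ (LieAlgebra.ad K g x).range) : (e Z).2.1 = 0 := by
  obtain ⟨Y, rfl⟩ := hZ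
  simp [he x Y, hx, frameBracket]

theorem eq_zero_of_forall_lie_mem (he : IsFrame e L M κ) (hx : e x = (1, 0, 0, 0))
    (hder : ∀ X Y : g, ⁅X, Y⁆ ∈ (LieAlgebra.ad K g x).range) : κ = 0 := by
  have hκ (u v : Fin 3 → K) : κ ⬝ᵥ u ⨯₃ v = 0 := by
    simpa [he _ _, frameBracket] using
      he.apply_eq_zero_of_mem_range_ad hx (hder (e.symm (0, 0, u, 0)) (e.symm (0, 0, v, 0)))
  ext i
  fin_cases i
  · simpa [cross_apply, dotProduct, Fin.sum_univ_three, -dotProduct_cons] using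
      hκ ![0, 1, 0] ![0, 0, 1]
  · simpa [cross_apply, dotProduct, Fin.sum_univ_three, -dotProduct_cons] using
      hκ ![0, 0, 1] ![1, 0, 0]
  · simpa [cross_apply, dotProduct, Fin.sum_univ_three, -dotProduct_cons] using
      hκ ![1, 0, 0] ![0, 1, 0]

end IsFrame

theorem exists_isFrame_of_forall_lie_mem (h2 : ∀ X Y Z : g, ⁅⁅X, Y⁆, Z⁆ = 0)
    (h8 : finrank K g = 8) (h3 : finrank K (LieAlgebra.ad K g x).range = 3)
    (hder : ∀ X Y : g, ⁅X, Y⁆ ∈ (LieAlgebra.ad K g x).range) :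
    ∃ (e : g ≃ₗ[K] FrameCoord K) (L M : Matrix (Fin 3) (Fin 3) K),
      IsPencilNormalForm L ∧ IsFrame e L M 0 := by
  have : FiniteDimensional K g := .of_finrank_pos (by simp [h8])
  obtain ⟨w, hxw, hwx⟩ := exists_mem_ker_ad_notMem_sup (K := K) (x := x) (by lia)
  obtain ⟨σ, hσ⟩ := exists_section_ad K x
  let f := LinearMap.codRestrict (LieAlgebra.ad K g x).range (-(LieAlgebra.ad K g w ∘ₗ σ))
    fun r ↦ neg_mem (hder w (σ r))
  have hf (r) : (f r : g) = ⁅σ r, w⁆ := lie_skew _ _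
  obtain ⟨c, μ, b, hc, hL⟩ := exists_basis_isPencilNormalForm h3 f
  let τ := σ ∘ₗ b.equivFun.symm.toLinearMap
  have hτ (u : Fin 3 → K) : ⁅x, τ u⁆ = b.equivFun.symm u := hσ _
  have hw' : ⁅x, c • (w + μ • x)⁆ = 0 := by simp [hxw]
  have hwx' : c • (w + μ • x) ∉ K ∙ x ⊔ (LieAlgebra.ad K g x).range := by
    have hμx : μ • x ∈ K ∙ x ⊔ (LieAlgebra.ad K g x).range :=
      Submodule.mem_sup_left (Submodule.smul_mem _ μ (Submodule.mem_span_singleton_self x))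
    rwa [Submodule.smul_mem_iff _ hc, Submodule.add_mem_iff_left _ hμx]
  have hx : LieAlgebra.ad K g x ≠ 0 := by
    rintro h
    rw [h, LinearMap.range_zero, finrank_bot] at h3
    lia
  obtain ⟨e, he⟩ := exists_linearEquiv_symm_apply_eq h2 (by simp [h8]) hx hw' hwx' (τ := τ)
    fun u hu ↦ b.equivFun.symm.map_eq_zero_iff.1 (Subtype.ext ((hτ u).symm.trans hu))
  obtain ⟨M, κ, hM⟩ := exists_isFrame_of_symm_apply_eq h2 hw' he
    (L := LinearMap.toMatrix b b (c • (f - μ • 1)))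
    (fun u ↦ by
      obtain ⟨r, rfl⟩ := b.equivFun.surjective u
      have hLr : LinearMap.toMatrix b b (c • (f - μ • 1)) *ᵥ b.equivFun r =
          b.equivFun ((c • (f - μ • 1)) r) := LinearMap.toMatrix_mulVec_repr b b _ r
      rw [hτ, hLr, LinearEquiv.symm_apply_apply]
      simp [τ, hf, hσ, ← lie_skew _ x, sub_eq_add_neg])
    fun u v ↦ ⟨0, b.equivFun ⟨_, hder (τ u) (τ v)⟩, by simp [hτ]⟩
  have hex : e x = (1, 0, 0, 0) := by simp [← LinearEquiv.eq_symm_apply, he]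
  exact ⟨e, _, M, hL, hM.eq_zero_of_forall_lie_mem hex hder ▸ hM⟩

theorem notMem_sup_of_central (h2 : ∀ X Y Z : g, ⁅⁅X, Y⁆, Z⁆ = 0)
    (hx : LieAlgebra.ad K g x ≠ 0) (hw : ∀ Z : g, ⁅Z, w⁆ = 0)
    (hwr : w ∉ (LieAlgebra.ad K g x).range) : w ∉ K ∙ x ⊔ (LieAlgebra.ad K g x).range := by
  intro hmem
  obtain ⟨_, hs, r, hr, rfl⟩ := Submodule.mem_sup.1 hmem
  obtain ⟨t, rfl⟩ := Submodule.mem_span_singleton.1 hs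
  obtain rfl : t = 0 := by
    refine (smul_eq_zero.1 (LinearMap.ext fun Z ↦ ?_)).resolve_right hx
    have hZ := hw Z
    rwa [lie_add, lie_eq_zero_of_mem_range_ad h2 hr, add_zero, ← lie_skew, neg_eq_zero,
      smul_lie] at hZ
  exact hwr (by rwa [zero_smul, zero_add])

theorem exists_eq_smul_add_lie_of_central {V : Type*} [AddCommGroup V] [Module K V] [Nontrivial V]
    (h2 : ∀ X Y Z : g, ⁅⁅X, Y⁆, Z⁆ = 0) (hw : ∀ Z : g, ⁅Z, w⁆ = 0) {τ : V →ₗ[K] g}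
    (hτ : ∀ u, ⁅x, τ u⁆ = 0 → u = 0) {e : g ≃ₗ[K] K × K × V × V}
    (he : ∀ a c u v, e.symm (a, c, u, v) = a • x + c • w + τ u + ⁅x, τ v⁆) {T : g}
    (hT : ∀ Z : g, ⁅Z, T⁆ = 0) : ∃ (c : K) (v : V), T = c • w + ⁅x, τ v⁆ := by
  obtain ⟨⟨a, c, u, v⟩, rfl⟩ := e.symm.surjective T
  have hv (Z : g) : ⁅Z, ⁅x, τ v⁆⁆ = 0 := lie_eq_zero_of_mem_range_ad (K := K) h2 ⟨_, rfl⟩ Z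
  obtain rfl : u = 0 := hτ u (by simpa [he, hw, hv] using hT x)
  obtain ⟨y, hy⟩ := exists_ne (0 : V)
  have hyx : ⁅τ y, x⁆ ≠ 0 := by
    rw [← lie_skew, neg_ne_zero]
    exact mt (hτ y) hy
  obtain rfl : a = 0 := by simpa [he, hw, hv, hyx] using hT (τ y)
  exact ⟨c, v, by simp [he]⟩

theorem exists_isFrame_of_lie_notMem (h2 : ∀ X Y Z : g, ⁅⁅X, Y⁆, Z⁆ = 0)
    (h8 : finrank K g = 8) (h3 : finrank K (LieAlgebra.ad K g x).range = 3) {X Y : g}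
    (hXY : ⁅X, Y⁆ ∉ (LieAlgebra.ad K g x).range) :
    ∃ (e : g ≃ₗ[K] FrameCoord K) (M : Matrix (Fin 3) (Fin 3) K) (κ : Fin 3 → K),
      κ ≠ 0 ∧ IsFrame e 0 M κ := by
  have : FiniteDimensional K g := .of_finrank_pos (by simp [h8])
  obtain ⟨σ, hσ⟩ := exists_section_ad K x
  let b := Module.finBasisOfFinrankEq K (LieAlgebra.ad K g x).range h3
  let τ := σ ∘ₗ b.equivFun.symm.toLinearMap
  have hτ (u : Fin 3 → K) (hu : ⁅x, τ u⁆ = 0) : u = 0 :=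
    b.equivFun.symm.map_eq_zero_iff.1 (Subtype.ext ((hσ _).symm.trans hu))
  have hx : LieAlgebra.ad K g x ≠ 0 := by
    rintro h
    rw [h, LinearMap.range_zero, finrank_bot] at h3
    lia
  have hcentral (Z X Y : g) : ⁅Z, ⁅X, Y⁆⁆ = 0 := by rw [← lie_skew, h2, neg_zero]
  obtain ⟨e, he⟩ := exists_linearEquiv_symm_apply_eq h2 (by simp [h8]) hx (hcentral x X Y)
    (notMem_sup_of_central h2 hx (hcentral · X Y) hXY) hτ
  obtain ⟨M, κ, hM⟩ := exists_isFrame_of_symm_apply_eq h2 (hcentral x X Y) he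
    (L := 0) (by simp [hcentral]) fun u v ↦
      exists_eq_smul_add_lie_of_central h2 (hcentral · X Y) hτ he (hcentral · (τ u) (τ v))
  refine ⟨e, M, κ, fun hκ ↦ ?_, hM⟩
  have hew : e ⁅X, Y⁆ = (0, 1, 0, 0) := by simp [← LinearEquiv.eq_symm_apply, he]
  have hcoord := hM X Y
  simp [hκ, hew, frameBracket] at hcoord

end Frames

/-! ### The symplectic criterion -/

theorem eightDim_charSeq32_symplectic_iff_general (h2 : ∀ X Y Z : g, ⁅⁅X, Y⁆, Z⁆ = 0)
    (h8 : finrank K g = 8) (h3 : ∃ x : g, finrank K (LieAlgebra.ad K g x).range = 3) :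
    HasSymplecticForm K g ↔ ¬ IsExceptional K g := by
  refine ⟨fun hω hg ↦ hg.not_hasSymplecticForm hω, fun hg ↦ ?_⟩
  obtain ⟨x, hx⟩ := h3
  by_cases hder : ∀ X Y : g, ⁅X, Y⁆ ∈ (LieAlgebra.ad K g x).range
  · obtain ⟨e, L, M, hL, he⟩ := exists_isFrame_of_forall_lie_mem h2 h8 hx hder
    cases hL with
    | zero => exact he.hasSymplecticForm_of_zero
    | companion d₀ d₁ d₂ => exact he.hasSymplecticForm_of_companion
    | nilpotent => exact he.hasSymplecticForm_of_nilpotent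
    | idempotent =>
      exact he.hasSymplecticForm_of_idempotent fun h₀₀ h₁₁ h₀₁ ↦
        by_contra fun h₂₂ ↦ hg (he.isExceptional h₀₀ h₁₁ h₀₁ h₂₂)
  · push Not at hder
    obtain ⟨X, Y, hXY⟩ := hder
    obtain ⟨e, M, κ, hκ, he⟩ := exists_isFrame_of_lie_notMem h2 h8 hx hXY
    exact he.hasSymplecticForm_of_ne_zero hκ

end

theorem exists_isSymplecticForm_iff {K : Type*} [RCLike K] {g : Type*} [LieRing g]
    [LieAlgebra K g] :
    (∃ θ : g → g → K, IsSymplecticForm K g θ) ↔ HasSymplecticForm K g := by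
  constructor
  · rintro ⟨θ, hleft, hright, halt, hnd, hclosed⟩
    have hzl (Y : g) : θ 0 Y = 0 := by simpa using hleft 1 0 0 Y
    have hzr (X : g) : θ X 0 = 0 := by simpa using hright 1 X 0 0
    let ω : LinearMap.BilinForm K g := LinearMap.mk₂ K θ
      (fun X Y Z ↦ by simpa using hleft 1 X Y Z) (fun a X Z ↦ by simpa [hzl] using hleft a X 0 Z)
      (fun X Y Z ↦ by simpa using hright 1 X Y Z) fun a X Y ↦ by simpa [hzr] using hright a X Y 0
    have hω : ω.IsAlt := halt
    exact ⟨ω, hω, hω.isRefl.nondegenerate_iff_separatingLeft.2 hnd, hclosed⟩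
  · rintro ⟨ω, halt, hnd, hclosed⟩
    exact ⟨fun X Y ↦ ω X Y, by simp, by simp, halt, hnd.1, hclosed⟩

theorem NonSympl8.lie_eq {K : Type*} [RCLike K] (X Y : NonSympl8 K) :
    ⁅X, Y⁆ = exceptionalBracket X Y := by
  change NonSympl8.brak X Y = _
  ext i
  fin_cases i <;> rfl

theorem nonempty_lieEquiv_nonSympl8_iff {K : Type*} [RCLike K] {g : Type*} [LieRing g]
    [LieAlgebra K g] : Nonempty (g ≃ₗ⁅K⁆ NonSympl8 K) ↔ IsExceptional K g := by
  constructor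
  · rintro ⟨e⟩
    exact ⟨e.toLinearEquiv, fun X Y ↦ (e.map_lie X Y).trans (NonSympl8.lie_eq _ _)⟩
  · rintro ⟨e, he⟩
    exact ⟨{ e with map_lie' := fun {X Y} ↦ (he X Y).trans (NonSympl8.lie_eq _ _).symm }⟩

/-- An 8-dimensional 2-step nilpotent Lie algebra over `K` with characteristic sequence
`(2,2,2,1,1)` admits a symplectic form if and only if it is not isomorphic to the Lie
algebra with nonzero brackets `⁅X₁,X₂⁆ = X₃`, `⁅X₁,X₄⁆ = X₅`, `⁅X₁,X₆⁆ = X₇`,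
`⁅X₂,X₄⁆ = X₇`, `⁅X₆,X₈⁆ = X₇`. -/
theorem eightDim_charSeq32_symplectic_iff
    (K : Type*) [RCLike K] (g : Type*) [LieRing g] [LieAlgebra K g] [FiniteDimensional K g]
    (h2 : IsTwoStepNilpotent g) (h8 : Module.finrank K g = 8)
    (hc : HasCharSeqTwos K g 3) :
    (∃ θ : g → g → K, IsSymplecticForm K g θ) ↔ ¬ Nonempty (g ≃ₗ⁅K⁆ NonSympl8 K) := by
  obtain ⟨-, x, -, hx⟩ := hc
  rw [exists_isSymplecticForm_iff, nonempty_lieEquiv_nonSympl8_iff]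
  exact eightDim_charSeq32_symplectic_iff_general h2.1 h8 ⟨x, hx⟩
end

section
/- Every 8-dimensional 2-step nilpotent symplectic Lie algebra over K (K = ℝ or ℂ) with characteristic sequence (2,2,1,1,1,1) is decomposable, i.e. is the direct sum of two nonzero ideals. -/
/-!
If a central vector lies outside the derived algebra `D`, its span and a complement containing `D`
are complementary ideals. So it suffices to show `dim D < dim Z`, where `Z` is the centre.

Let `ad x` have maximal rank. In the pencil `ad (x + t y)` the rank cannot grow, which forces
`⁅y, c⁆ ∈ range (ad x)` whenever `⁅x, c⁆ = 0`. Hence either `D = range (ad x)`, so `dim D ≤ 2`, or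
there are `x, y, z` with `⁅x, y⁆, ⁅y, z⁆, ⁅z, x⁆` linearly independent.

* In the second case, applying the pencil argument to `x`, `y` and `z`, whose `ad` have the maximal
  rank 2, shows that `x, y, z` span the algebra modulo `Z`. So `dim D = 3` and `dim Z ≥ 8 - 3`.
* In the first case, for `u` in the symplectic complement `D^⊥`, closedness says exactly that
  `(v, w) ↦ ω ⁅u, v⁆ w` is symmetric. This form vanishes when `v ∈ D^⊥`, and it is zero only for
  `u ∈ Z`. So `D^⊥ / (D^⊥ ∩ Z)` embeds in the symmetric forms on a space of dimension `d = dim D`,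
  and `8 ≤ dim Z + d + d (d + 1) / 2` gives `dim Z ≥ 3 > d`.
-/

open Module LieAlgebra Submodule

section LinearAlgebra

variable {K V W : Type*} [Field K] [AddCommGroup V] [Module K V] [AddCommGroup W] [Module K W]

theorem linearIndependent_triple_iff {u v w : V} :
    LinearIndependent K ![u, v, w] ↔
      ∀ a b c : K, a • u + b • v + c • w = 0 → a = 0 ∧ b = 0 ∧ c = 0 := by
  simp [Fintype.linearIndependent_iff, Fin.sum_univ_three, Fin.forall_fin_succ_pi,
    Fin.forall_fin_succ]

theorem linearIndependent_triple_rotate {u v w : V} (h : LinearIndependent K ![u, v, w]) :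
    LinearIndependent K ![v, w, u] := by
  rw [linearIndependent_triple_iff] at h ⊢
  intro b c a habc
  obtain ⟨ha, hb, hc⟩ := h a b c (by rw [← habc]; abel)
  exact ⟨hb, hc, ha⟩

theorem linearIndependent_pair_of_triple {u v w : V} (h : LinearIndependent K ![u, v, w]) :
    LinearIndependent K ![u, w] := by
  refine LinearIndependent.pair_iff.mpr fun a c hac ↦ ?_
  obtain ⟨ha, -, hc⟩ := linearIndependent_triple_iff.mp h a 0 c (by simpa using hac)
  exact ⟨ha, hc⟩

theorem exists_smul_eq_of_mem_span_pair {u v w p : V} (h : LinearIndependent K ![u, v, w])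
    (huw : p ∈ span K {u, w}) (hvu : p ∈ span K {v, u}) : ∃ a : K, a • u = p := by
  obtain ⟨a, c, rfl⟩ := mem_span_pair.mp huw
  obtain ⟨b, a', hba'⟩ := mem_span_pair.mp hvu
  obtain ⟨-, -, hc⟩ := linearIndependent_triple_iff.mp h (a - a') (-b) c (by
    linear_combination (norm := module) -hba')
  exact ⟨a, by rw [hc, zero_smul, add_zero]⟩

-- If `f` is a left inverse of `v` and `N := f ∘ w`, a relation at `t` makes `-t⁻¹` an eigenvalue of
-- `N`.
theorem finite_setOf_not_linearIndependent_add_smul {ι : Type*} [Finite ι] {v : ι → V}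
    (hv : LinearIndependent K v) (w : ι → V) :
    {t : K | ¬LinearIndependent K (v + t • w)}.Finite := by
  have := Fintype.ofFinite ι
  obtain ⟨f, hf⟩ := LinearMap.exists_leftInverse_of_injective _
    (LinearMap.ker_eq_bot.mpr hv.fintypeLinearCombination_injective)
  let N : End K (ι → K) := f ∘ₗ Fintype.linearCombination K w
  refine (N.finite_hasEigenvalue.preimage (f := fun t : K ↦ -t⁻¹)
    (by intro s _ t _ hst; simpa using hst)).subset fun t ht ↦ ?_
  contrapose! ht
  rw [Set.mem_ofPred_eq, not_not, linearIndependent_iff_injective_fintypeLinearCombination,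
    injective_iff_map_eq_zero]
  intro x hx
  have hxN : x + t • N x = 0 := by
    have hfx := congr(f $hx)
    have hsum : Fintype.linearCombination K (v + t • w) x =
        Fintype.linearCombination K v x + t • Fintype.linearCombination K w x := by
      simp [Fintype.linearCombination_apply, Finset.sum_add_distrib, Finset.smul_sum, smul_comm t]
    rwa [hsum, map_add, map_smul, map_zero, ← LinearMap.comp_apply f, hf] at hfx
  by_contra hx0
  have ht0 : t ≠ 0 := by
    rintro rfl
    simp_all
  refine ht (End.hasEigenvalue_of_hasEigenvector (x := x)
    ⟨End.mem_eigenspace_iff.mpr ?_, hx0⟩)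
  rw [neg_smul, ← smul_neg, eq_inv_smul_iff₀ ht0]
  exact eq_neg_of_add_eq_zero_right hxN

theorem exists_ne_zero_linearIndependent_add_smul [Infinite K] {ι : Type*} [Finite ι] {v : ι → V}
    (hv : LinearIndependent K v) (w : ι → V) :
    ∃ t : K, t ≠ 0 ∧ LinearIndependent K (v + t • w) := by
  obtain ⟨t, ht⟩ := ((finite_setOf_not_linearIndependent_add_smul hv w).insert 0).exists_notMem
  exact ⟨t, by simpa using ht⟩

theorem apply_mem_range_of_finrank_range_add_smul_le [Infinite K] [FiniteDimensional K W]
    {A B : V →ₗ[K] W}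
    (h : ∀ t : K, finrank K (LinearMap.range (A + t • B)) ≤ finrank K (LinearMap.range A))
    {c : V} (hc : A c = 0) : B c ∈ LinearMap.range A := by
  by_contra hBc
  let b := finBasis K (LinearMap.range A)
  choose a ha using fun i ↦ (b i).2
  have hAa : LinearIndependent K (A ∘ a) := by
    have : A ∘ a = (LinearMap.range A).subtype ∘ b := funext ha
    rw [this]
    exact b.linearIndependent.map' _ (Submodule.ker_subtype _)
  have hli : LinearIndependent K (Fin.cons (B c) (A ∘ a) : Fin _ → W) :=
    linearIndependent_finCons.mpr ⟨hAa, fun hmem ↦ hBc <|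
      span_le.mpr (Set.range_subset_iff.mpr fun i ↦ LinearMap.mem_range_self A (a i)) hmem⟩
  obtain ⟨t, ht0, ht⟩ := exists_ne_zero_linearIndependent_add_smul hli
    (Fin.cons 0 (B ∘ a) : Fin _ → W)
  let a' : Fin _ → V := Fin.cons (t⁻¹ • c) a
  have ha' : Fin.cons (B c) (A ∘ a) + t • (Fin.cons 0 (B ∘ a) : Fin _ → W) =
      (A + t • B) ∘ a' := by
    funext i
    refine Fin.cases ?_ (fun j ↦ ?_) i <;> simp [a', hc, ht0]
  have hrange : span K (Set.range ((A + t • B) ∘ a')) ≤ LinearMap.range (A + t • B) :=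
    span_le.mpr (Set.range_comp_subset_range _ _)
  have hlt := (finrank_mono hrange).trans (h t)
  rw [finrank_span_eq_card (ha' ▸ ht), Fintype.card_fin] at hlt
  omega

theorem range_eq_span_pair_of_finrank_le_two [FiniteDimensional K W] {A : V →ₗ[K] W}
    (hA : finrank K (LinearMap.range A) ≤ 2) {u v : W} (hu : u ∈ LinearMap.range A)
    (hv : v ∈ LinearMap.range A) (huv : LinearIndependent K ![u, v]) :
    LinearMap.range A = span K {u, v} := by
  refine (eq_of_le_of_finrank_le (span_le.mpr (Set.pair_subset hu hv)) ?_).symm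
  have := finrank_span_eq_card huv
  rw [Matrix.range_cons_cons_empty, Fintype.card_fin] at this
  rwa [this]

theorem finrank_span_triple_le_three (u v w : V) : finrank K (span K {u, v, w}) ≤ 3 := by
  classical
  have := (finrank_span_finset_le_card (R := K) {u, v, w}).trans Finset.card_le_three
  rwa [Finset.coe_insert, Finset.coe_pair] at this

theorem bilinForm_eq_zero_of_isSymm_of_le_ker {B : LinearMap.BilinForm K V} (hB : B.IsSymm)
    {P : Submodule K V} (hP : P ≤ LinearMap.ker B) {ι : Type*} {b : ι → V}
    (hb : Codisjoint P (span K (Set.range b))) (h : ∀ i j, B (b i) (b j) = 0) : B = 0 := by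
  have hspan {y : V} (hy : ∀ i, B (b i) y = 0) : B.flip y = 0 := by
    rw [← LinearMap.ker_eq_top, eq_top_iff, ← codisjoint_iff.mp hb, sup_le_iff, span_le,
      Set.range_subset_iff]
    exact ⟨fun p hp ↦ by simpa using congr($(hP hp) y), hy⟩
  ext x y
  refine congr($(hspan fun i ↦ ?_) x)
  rw [← hB.eq]
  exact congr($(hspan fun j ↦ h j i) y)

-- `B v` is determined by its entries at the unordered pairs of a basis of a complement of `P`.
theorem finrank_le_finrank_ker_add_choose [FiniteDimensional K V] [FiniteDimensional K W]
    {B : V →ₗ[K] LinearMap.BilinForm K W} (hB : ∀ v, (B v).IsSymm) {P : Submodule K W}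
    (hP : ∀ v, P ≤ LinearMap.ker (B v)) :
    finrank K V ≤ finrank K (LinearMap.ker B) + (finrank K (W ⧸ P) + 1).choose 2 := by
  obtain ⟨C, hC⟩ := P.exists_isCompl
  rw [(quotientEquivOfIsCompl P C hC).finrank_eq]
  let b : Fin (finrank K C) → W := C.subtype ∘ finBasis K C
  have hb : span K (Set.range b) = C := by
    rw [Set.range_comp, span_image, (finBasis K C).span_eq, map_subtype_top]
  let entries : V →ₗ[K] Sym2 (Fin (finrank K C)) → K :=
    LinearMap.pi fun s ↦
      LinearMap.applyₗ (b s.out.2) ∘ₗ LinearMap.applyₗ (b s.out.1) ∘ₗ B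
  have hker : LinearMap.ker entries ≤ LinearMap.ker B := fun v hv ↦ by
    refine bilinForm_eq_zero_of_isSymm_of_le_ker (hB v) (hP v) (b := b)
      (hb.symm ▸ hC.codisjoint) fun i j ↦ ?_
    have hij : B v (b s(i, j).out.1) (b s(i, j).out.2) = 0 := congr_fun hv s(i, j)
    have hout : s(s(i, j).out.1, s(i, j).out.2) = s(i, j) := Quot.out_eq _
    rcases Sym2.eq_iff.mp hout with ⟨hi, hj⟩ | ⟨hj, hi⟩
    · rwa [hi, hj] at hij
    · rwa [hi, hj, (hB v).eq] at hij
  have hcard : finrank K (LinearMap.range entries) ≤ (finrank K C + 1).choose 2 := by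
    simpa [Sym2.card] using (LinearMap.range entries).finrank_le
  have := entries.finrank_range_add_finrank_ker
  have := finrank_mono hker
  omega

end LinearAlgebra

section LieAlgebra

variable {K L : Type*} [Field K] [LieRing L] [LieAlgebra K L]

theorem derivedSeries_one_le_iff {U : Submodule K L} :
    (derivedSeries K L 1).toSubmodule ≤ U ↔ ∀ x y : L, ⁅x, y⁆ ∈ U := by
  have hspan : (derivedSeries K L 1).toSubmodule = span K {⁅x, y⁆ | (x : L) (y : L)} :=
    coe_derivedSeries_one_eq K L
  rw [hspan, span_le]
  exact ⟨fun h x y ↦ h ⟨x, y, rfl⟩, by rintro h _ ⟨x, y, rfl⟩; exact h x y⟩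

theorem lie_mem_derivedSeries_one (x y : L) : ⁅x, y⁆ ∈ (derivedSeries K L 1).toSubmodule :=
  derivedSeries_one_le_iff.mp le_rfl x y

theorem exists_lieIdeal_toSubmodule_eq_of_le_center {U : Submodule K L}
    (hU : U ≤ (center K L).toSubmodule) : ∃ I : LieIdeal K L, I.toSubmodule = U :=
  ⟨{ U with
      lie_mem := fun {x m} hm ↦ by
        have hxm : ⁅x, m⁆ = 0 := hU hm x
        exact hxm ▸ U.zero_mem }, rfl⟩

theorem exists_lieIdeal_toSubmodule_eq_of_derivedSeries_one_le {U : Submodule K L}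
    (hU : (derivedSeries K L 1).toSubmodule ≤ U) : ∃ I : LieIdeal K L, I.toSubmodule = U :=
  ⟨{ U with lie_mem := fun {x m} _ ↦ derivedSeries_one_le_iff.mp hU x m }, rfl⟩

theorem exists_isCompl_lieIdeal_of_not_center_le (hdim : 1 < finrank K L)
    (hcenter : ¬center K L ≤ derivedSeries K L 1) :
    ∃ I J : LieIdeal K L, I ≠ ⊥ ∧ J ≠ ⊥ ∧ I ⊓ J = ⊥ ∧ I ⊔ J = ⊤ := by
  obtain ⟨z, hz, hzD⟩ := SetLike.not_le_iff_exists.mp hcenter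
  have hz0 : z ≠ 0 := fun h ↦ hzD (h ▸ zero_mem _)
  have hdisj : Disjoint (derivedSeries K L 1).toSubmodule (K ∙ z) :=
    disjoint_span_singleton_of_notMem hzD
  obtain ⟨U, hDU, hU⟩ := hdisj.exists_isCompl
  obtain ⟨I, hI⟩ := exists_lieIdeal_toSubmodule_eq_of_le_center
    ((span_singleton_le_iff_mem z _).mpr hz)
  obtain ⟨J, hJ⟩ := exists_lieIdeal_toSubmodule_eq_of_derivedSeries_one_le hDU
  have hIJ : IsCompl I J := by
    rw [← LieSubmodule.isCompl_toSubmodule, hI, hJ]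
    exact hU.symm
  refine ⟨I, J, ?_, ?_, hIJ.inf_eq_bot, hIJ.sup_eq_top⟩
  · rw [Ne, ← LieSubmodule.toSubmodule_eq_bot, hI]
    simpa using hz0
  · rintro rfl
    have hspan : K ∙ z = ⊤ := by rw [← hI, eq_top_of_isCompl_bot hIJ, LieSubmodule.top_toSubmodule]
    have := finrank_span_singleton (K := K) hz0
    rw [hspan, finrank_top] at this
    omega

theorem derivedSeries_one_le_span_triple {x y z : L}
    (htop : span K {x, y, z} ⊔ (center K L).toSubmodule = ⊤) :
    (derivedSeries K L 1).toSubmodule ≤ span K {⁅x, y⁆, ⁅y, z⁆, ⁅z, x⁆} := by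
  refine derivedSeries_one_le_iff.mpr fun v w ↦ ?_
  have hdecomp (u : L) : ∃ a b c : K, ∃ d ∈ center K L, a • x + b • y + c • z + d = u := by
    obtain ⟨_, ht, d, hd, rfl⟩ := mem_sup.mp (htop ▸ mem_top : u ∈ _)
    obtain ⟨a, b, c, rfl⟩ := mem_span_triple.mp ht
    exact ⟨a, b, c, d, hd, rfl⟩
  obtain ⟨a, b, c, d, hd, rfl⟩ := hdecomp v
  obtain ⟨a', b', c', d', hd', rfl⟩ := hdecomp w
  have hright (u : L) : ⁅u, d'⁆ = 0 := hd' u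
  have hleft (u : L) : ⁅d, u⁆ = 0 := by rw [← lie_skew, hd u, neg_zero]
  refine mem_span_triple.mpr ⟨a * b' - b * a', b * c' - c * b', c * a' - a * c', ?_⟩
  simp only [add_lie, lie_add, smul_lie, lie_smul, lie_self, hright, hleft,
    ← lie_skew y x, ← lie_skew z y, ← lie_skew x z]
  module

section BoundedRank

variable [FiniteDimensional K L]

variable (K L) in
theorem exists_forall_finrank_range_ad_le :
    ∃ x : L, ∀ y : L, finrank K (ad K L y).range ≤ finrank K (ad K L x).range := by
  have hfin : (Set.range fun x : L ↦ finrank K (ad K L x).range).Finite :=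
    (Set.finite_Iic (finrank K L)).subset
      (Set.range_subset_iff.mpr fun x ↦ (ad K L x).range.finrank_le)
  obtain ⟨_, ⟨x, rfl⟩, hx⟩ := hfin.exists_maximal (Set.range_nonempty _)
  exact ⟨x, fun y ↦ (le_total _ _).elim id (hx ⟨y, rfl⟩)⟩

theorem lie_mem_range_ad_of_lie_eq_zero [Infinite K] {x : L}
    (hx : ∀ y : L, finrank K (ad K L y).range ≤ finrank K (ad K L x).range) {c : L}
    (hc : ⁅x, c⁆ = 0) (y : L) : ⁅y, c⁆ ∈ (ad K L x).range :=
  apply_mem_range_of_finrank_range_add_smul_le (A := ad K L x) (B := ad K L y)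
    (fun t ↦ (by rw [map_add, map_smul] : ad K L (x + t • y) = ad K L x + t • ad K L y) ▸ hx _) hc

theorem lie_mem_range_ad_or_linearIndependent [Infinite K] {x : L}
    (hx : ∀ y : L, finrank K (ad K L y).range ≤ finrank K (ad K L x).range) (y z : L) :
    ⁅y, z⁆ ∈ (ad K L x).range ∨ LinearIndependent K ![⁅x, y⁆, ⁅y, z⁆, ⁅z, x⁆] := by
  refine or_iff_not_imp_left.mpr fun hyz ↦ linearIndependent_triple_iff.mpr fun a b c habc ↦ ?_
  rw [← lie_skew z x] at habc
  have hb : b = 0 := by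
    by_contra hb
    refine hyz ⟨b⁻¹ • (c • z - a • y), ?_⟩
    rw [LieAlgebra.ad_apply, lie_smul, inv_smul_eq_iff₀ hb, lie_sub, lie_smul, lie_smul]
    linear_combination (norm := module) -habc
  have hcomm : ⁅x, a • y - c • z⁆ = 0 := by
    rw [lie_sub, lie_smul, lie_smul, ← habc, hb]
    module
  have hy := lie_mem_range_ad_of_lie_eq_zero hx hcomm y
  have hz := lie_mem_range_ad_of_lie_eq_zero hx hcomm z
  rw [lie_sub, lie_smul, lie_smul, lie_self, smul_zero, zero_sub, neg_mem_iff] at hy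
  rw [lie_sub, lie_smul, lie_smul, lie_self, smul_zero, sub_zero, ← lie_skew, smul_neg,
    neg_mem_iff] at hz
  refine ⟨?_, hb, ?_⟩
  · by_contra ha
    exact hyz ((smul_mem_iff _ ha).mp hz)
  · by_contra hc
    exact hyz ((smul_mem_iff _ hc).mp hy)

theorem range_ad_eq_span_pair (hrank : ∀ w : L, finrank K (ad K L w).range ≤ 2) {x y z : L}
    (hli : LinearIndependent K ![⁅x, y⁆, ⁅z, x⁆]) :
    (ad K L x).range = span K {⁅x, y⁆, ⁅z, x⁆} :=
  range_eq_span_pair_of_finrank_le_two (hrank x) ⟨y, rfl⟩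
    ⟨-z, by rw [ad_apply, lie_neg, lie_skew]⟩ hli

theorem lie_mem_span_pair_of_lie_eq_zero [Infinite K]
    (hrank : ∀ w : L, finrank K (ad K L w).range ≤ 2) {x y z : L}
    (hli : LinearIndependent K ![⁅x, y⁆, ⁅z, x⁆]) {c : L} (hc : ⁅x, c⁆ = 0) (w : L) :
    ⁅w, c⁆ ∈ span K {⁅x, y⁆, ⁅z, x⁆} := by
  have hrange := range_ad_eq_span_pair hrank hli
  have hmax : finrank K (ad K L x).range = 2 := by
    rw [hrange, ← Matrix.range_cons_cons_empty _ _ ![], finrank_span_eq_card hli, Fintype.card_fin]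
  exact hrange ▸ lie_mem_range_ad_of_lie_eq_zero (fun y ↦ hmax ▸ hrank y) hc w

-- `⁅w, c⁆` lies in the three planes spanned by two of the three brackets, which meet only in `0`.
theorem mem_center_of_lie_eq_zero [Infinite K] (hrank : ∀ w : L, finrank K (ad K L w).range ≤ 2)
    {x y z : L} (hli : LinearIndependent K ![⁅x, y⁆, ⁅y, z⁆, ⁅z, x⁆]) {c : L} (hx : ⁅x, c⁆ = 0)
    (hy : ⁅y, c⁆ = 0) (hz : ⁅z, c⁆ = 0) : c ∈ center K L := by
  refine (LieModule.mem_maxTrivSubmodule K L L c).mpr fun w ↦ ?_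
  have hli' := linearIndependent_triple_rotate hli
  have hli'' := linearIndependent_triple_rotate hli'
  have hwx := lie_mem_span_pair_of_lie_eq_zero hrank (linearIndependent_pair_of_triple hli) hx w
  have hwy := lie_mem_span_pair_of_lie_eq_zero hrank (linearIndependent_pair_of_triple hli') hy w
  have hwz := lie_mem_span_pair_of_lie_eq_zero hrank (linearIndependent_pair_of_triple hli'') hz w
  obtain ⟨a, ha⟩ := exists_smul_eq_of_mem_span_pair hli hwx hwy
  obtain ⟨b, hb⟩ := exists_smul_eq_of_mem_span_pair hli' hwy hwz
  obtain ⟨ha0, -⟩ := linearIndependent_triple_iff.mp hli a (-b) 0 (by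
    rw [ha, neg_smul, hb, zero_smul, add_zero, add_neg_cancel])
  rw [← ha, ha0, zero_smul]

theorem exists_smul_lie_eq_of_lie_eq_zero [Infinite K]
    (hrank : ∀ w : L, finrank K (ad K L w).range ≤ 2) {x y z : L}
    (hli : LinearIndependent K ![⁅x, y⁆, ⁅y, z⁆, ⁅z, x⁆]) {c : L} (hc : ⁅x, c⁆ = 0) :
    ∃ a : K, a • ⁅x, y⁆ = ⁅y, c⁆ := by
  have hyc : ⁅y, c⁆ ∈ (ad K L y).range := ⟨c, rfl⟩
  rw [range_ad_eq_span_pair hrank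
    (linearIndependent_pair_of_triple (linearIndependent_triple_rotate hli))] at hyc
  exact exists_smul_eq_of_mem_span_pair hli
    (lie_mem_span_pair_of_lie_eq_zero hrank (linearIndependent_pair_of_triple hli) hc y) hyc

-- `⁅v, c⁆` is a multiple of `⁅x, v⁆` for `v = y`, `z`, `y + z`; independence equates the factors.
theorem exists_smul_lie_eq_and_smul_lie_eq_of_lie_eq_zero [Infinite K]
    (hrank : ∀ w : L, finrank K (ad K L w).range ≤ 2) {x y z : L}
    (hli : LinearIndependent K ![⁅x, y⁆, ⁅y, z⁆, ⁅z, x⁆]) {c : L} (hc : ⁅x, c⁆ = 0) :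
    ∃ a : K, a • ⁅x, y⁆ = ⁅y, c⁆ ∧ a • ⁅x, z⁆ = ⁅z, c⁆ := by
  have hli₀ := linearIndependent_triple_iff.mp hli
  have hswap : LinearIndependent K ![⁅x, z⁆, ⁅z, y⁆, ⁅y, x⁆] := by
    refine linearIndependent_triple_iff.mpr fun r s t hrst ↦ ?_
    rw [← lie_skew x z, ← lie_skew z y, ← lie_skew y x] at hrst
    obtain ⟨ht, hs, hr⟩ := hli₀ t s r (by linear_combination (norm := module) -hrst)
    exact ⟨hr, hs, ht⟩
  have hshear : LinearIndependent K ![⁅x, y + z⁆, ⁅y + z, z⁆, ⁅z, x⁆] := by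
    refine linearIndependent_triple_iff.mpr fun r s t hrst ↦ ?_
    rw [lie_add, add_lie, lie_self, ← lie_skew x z] at hrst
    obtain ⟨hr, hs, ht⟩ := hli₀ r s (t - r) (by linear_combination (norm := module) hrst)
    exact ⟨hr, hs, by rwa [hr, sub_zero] at ht⟩
  obtain ⟨a, ha⟩ := exists_smul_lie_eq_of_lie_eq_zero hrank hli hc
  obtain ⟨b, hb⟩ := exists_smul_lie_eq_of_lie_eq_zero hrank hswap hc
  obtain ⟨e, he⟩ := exists_smul_lie_eq_of_lie_eq_zero hrank hshear hc
  have hbe : a = e ∧ b = e := by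
    rw [lie_add, add_lie, ← ha, ← hb, ← lie_skew x z] at he
    obtain ⟨hae, -, hbe⟩ := hli₀ (e - a) 0 (b - e) (by linear_combination (norm := module) he)
    exact ⟨(sub_eq_zero.mp hae).symm, sub_eq_zero.mp hbe⟩
  exact ⟨a, ha, by rw [hbe.1, ← hbe.2, hb]⟩

theorem add_smul_mem_center_of_lie_eq_zero [Infinite K]
    (hrank : ∀ w : L, finrank K (ad K L w).range ≤ 2) {x y z : L}
    (hli : LinearIndependent K ![⁅x, y⁆, ⁅y, z⁆, ⁅z, x⁆]) {c : L} (hc : ⁅x, c⁆ = 0) :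
    ∃ a : K, c + a • x ∈ center K L := by
  obtain ⟨a, hy, hz⟩ := exists_smul_lie_eq_and_smul_lie_eq_of_lie_eq_zero hrank hli hc
  refine ⟨a, mem_center_of_lie_eq_zero hrank hli ?_ ?_ ?_⟩
  · rw [lie_add, lie_smul, hc, lie_self, smul_zero, add_zero]
  · rw [lie_add, lie_smul, ← hy, ← smul_add, ← lie_skew x y, neg_add_cancel, smul_zero]
  · rw [lie_add, lie_smul, ← hz, ← smul_add, ← lie_skew x z, neg_add_cancel, smul_zero]

theorem span_triple_sup_center_eq_top [Infinite K]
    (hrank : ∀ w : L, finrank K (ad K L w).range ≤ 2) {x y z : L}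
    (hli : LinearIndependent K ![⁅x, y⁆, ⁅y, z⁆, ⁅z, x⁆]) :
    span K {x, y, z} ⊔ (center K L).toSubmodule = ⊤ := by
  refine eq_top_iff'.mpr fun w ↦ ?_
  obtain ⟨a, b, hab⟩ : ∃ a b : K, a • ⁅x, y⁆ + b • ⁅z, x⁆ = ⁅x, w⁆ := by
    rw [← mem_span_pair, ← range_ad_eq_span_pair hrank (linearIndependent_pair_of_triple hli)]
    exact ⟨w, rfl⟩
  have hc : ⁅x, w - a • y + b • z⁆ = 0 := by
    rw [lie_add, lie_sub, lie_smul, lie_smul, ← hab, ← lie_skew x z]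
    module
  obtain ⟨d, hd⟩ := add_smul_mem_center_of_lie_eq_zero hrank hli hc
  refine mem_sup.mpr ⟨_, mem_span_triple.mpr ⟨-d, a, -b, rfl⟩, _, hd, by module⟩

theorem finrank_derivedSeries_one_lt_finrank_center_of_linearIndependent [Infinite K]
    (hdim : 7 ≤ finrank K L) (hrank : ∀ w : L, finrank K (ad K L w).range ≤ 2) {x y z : L}
    (hli : LinearIndependent K ![⁅x, y⁆, ⁅y, z⁆, ⁅z, x⁆]) :
    finrank K (derivedSeries K L 1) < finrank K (center K L) := by
  have htop := span_triple_sup_center_eq_top hrank hli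
  have hD : finrank K (derivedSeries K L 1) ≤ _ :=
    finrank_mono (derivedSeries_one_le_span_triple htop)
  have hsum : finrank K L ≤ finrank K (span K {x, y, z}) + finrank K (center K L) := by
    rw [← finrank_top, ← htop]
    exact finrank_add_le_finrank_add_finrank (span K {x, y, z}) (center K L).toSubmodule
  have h₁ := finrank_span_triple_le_three (K := K) x y z
  have h₂ := finrank_span_triple_le_three (K := K) ⁅x, y⁆ ⁅y, z⁆ ⁅z, x⁆
  omega

theorem finrank_derivedSeries_one_le_two_or_exists_linearIndependent [Infinite K]
    (hrank : ∀ w : L, finrank K (ad K L w).range ≤ 2) :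
    finrank K (derivedSeries K L 1) ≤ 2 ∨
      ∃ x y z : L, LinearIndependent K ![⁅x, y⁆, ⁅y, z⁆, ⁅z, x⁆] := by
  obtain ⟨x, hx⟩ := exists_forall_finrank_range_ad_le K L
  by_cases hxD : (derivedSeries K L 1).toSubmodule ≤ (ad K L x).range
  · exact .inl ((finrank_mono hxD).trans (hrank x))
  · obtain ⟨y, z, hyz⟩ : ∃ y z : L, ⁅y, z⁆ ∉ (ad K L x).range := by
      simpa only [derivedSeries_one_le_iff, not_forall] using hxD
    exact .inr ⟨x, y, z, (lie_mem_range_ad_or_linearIndependent hx y z).resolve_left hyz⟩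

end BoundedRank

end LieAlgebra

section Symplectic

/-- A symplectic form on a Lie algebra, bundled as a bilinear form: alternating, nondegenerate and
closed for the Chevalley–Eilenberg differential. Unlike `IsSymplecticForm`, it makes sense over any
field and gives access to orthogonal complements. -/
structure IsSymplecticBilinForm_s14 {K L : Type*} [Field K] [LieRing L] [LieAlgebra K L]
    (ω : LinearMap.BilinForm K L) : Prop where
  isAlt : ω.IsAlt
  nondegenerate : ω.Nondegenerate
  closed (x y z : L) : ω ⁅x, y⁆ z + ω ⁅y, z⁆ x + ω ⁅z, x⁆ y = 0

namespace IsSymplecticBilinForm_s14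

variable {K L : Type*} [Field K] [LieRing L] [LieAlgebra K L] {ω : LinearMap.BilinForm K L}

theorem apply_lie_comm_of_mem_orthogonal (hω : IsSymplecticBilinForm_s14 ω) {x : L}
    (hx : x ∈ ω.orthogonal (derivedSeries K L 1).toSubmodule) (y z : L) :
    ω ⁅x, y⁆ z = ω ⁅x, z⁆ y := by
  have hyz : ω ⁅y, z⁆ x = 0 := hx _ (lie_mem_derivedSeries_one y z)
  have hclosed := hω.closed x y z
  rw [hyz, add_zero, ← lie_skew z x, map_neg, LinearMap.neg_apply] at hclosed
  exact eq_of_add_neg_eq_zero hclosed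

theorem lie_eq_zero_of_mem_orthogonal (hω : IsSymplecticBilinForm_s14 ω) {x y : L}
    (hx : x ∈ ω.orthogonal (derivedSeries K L 1).toSubmodule)
    (hy : y ∈ ω.orthogonal (derivedSeries K L 1).toSubmodule) : ⁅x, y⁆ = 0 := by
  refine hω.nondegenerate.1 _ fun z ↦ ?_
  rw [hω.apply_lie_comm_of_mem_orthogonal hx]
  exact hy _ (lie_mem_derivedSeries_one x z)

theorem finrank_le_finrank_center_add [FiniteDimensional K L] (hω : IsSymplecticBilinForm_s14 ω) :
    finrank K L ≤ finrank K (center K L) + finrank K (derivedSeries K L 1) +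
      (finrank K (derivedSeries K L 1) + 1).choose 2 := by
  set D := (derivedSeries K L 1).toSubmodule
  have horth : finrank K (ω.orthogonal D) = finrank K L - finrank K D :=
    LinearMap.BilinForm.finrank_orthogonal hω.nondegenerate D
  have hquot : finrank K (L ⧸ ω.orthogonal D) = finrank K D := by
    have := D.finrank_le
    rw [finrank_quotient, horth]
    omega
  let B : ω.orthogonal D →ₗ[K] LinearMap.BilinForm K L :=
    (ad K L : L →ₗ[K] End K L).compr₂ ω ∘ₗ (ω.orthogonal D).subtype
  have hker : finrank K (LinearMap.ker B) ≤ finrank K (center K L) := by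
    rw [← finrank_map_subtype_eq]
    refine finrank_mono (t := (center K L).toSubmodule) ?_
    rintro _ ⟨x, hx, rfl⟩ y
    rw [← lie_skew, neg_eq_zero]
    exact hω.nondegenerate.1 _ fun z ↦ congr($hx y z)
  have := finrank_le_finrank_ker_add_choose (B := B) (P := ω.orthogonal D)
    (fun x ↦ ⟨hω.apply_lie_comm_of_mem_orthogonal x.2⟩)
    (fun x y hy ↦ (congr_arg ω (hω.lie_eq_zero_of_mem_orthogonal x.2 hy)).trans (map_zero ω))
  rw [hquot] at this
  change finrank K L ≤ finrank K (center K L) + finrank K D + (finrank K D + 1).choose 2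
  omega

theorem finrank_derivedSeries_one_lt_finrank_center_of_le_two [FiniteDimensional K L]
    (hω : IsSymplecticBilinForm_s14 ω) (hdim : 8 ≤ finrank K L)
    (hD : finrank K (derivedSeries K L 1) ≤ 2) :
    finrank K (derivedSeries K L 1) < finrank K (center K L) := by
  have hchoose : (finrank K (derivedSeries K L 1) + 1).choose 2 ≤ 3 :=
    Nat.choose_le_choose 2 (Nat.succ_le_succ hD)
  have := hω.finrank_le_finrank_center_add
  omega

theorem not_center_le_derivedSeries_one [Infinite K] [FiniteDimensional K L]
    (hω : IsSymplecticBilinForm_s14 ω) (hdim : 8 ≤ finrank K L)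
    (hrank : ∀ x : L, finrank K (ad K L x).range ≤ 2) :
    ¬center K L ≤ derivedSeries K L 1 := by
  refine fun hle ↦ (finrank_mono (R := K) hle).not_gt ?_
  rcases finrank_derivedSeries_one_le_two_or_exists_linearIndependent hrank with hD | ⟨x, y, z, hli⟩
  · exact hω.finrank_derivedSeries_one_lt_finrank_center_of_le_two hdim hD
  · exact finrank_derivedSeries_one_lt_finrank_center_of_linearIndependent (by omega) hrank hli

end IsSymplecticBilinForm_s14

theorem IsSymplecticForm.exists_isSymplecticBilinForm {K g : Type*} [RCLike K] [LieRing g]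
    [LieAlgebra K g] {θ : g → g → K} (hθ : IsSymplecticForm K g θ) :
    ∃ ω : LinearMap.BilinForm K g, IsSymplecticBilinForm_s14 ω := by
  obtain ⟨hleft, hright, halt, hnondeg, hclosed⟩ := hθ
  have hzero_left (z : g) : θ 0 z = 0 := by simpa using hleft 1 0 0 z
  have hzero_right (z : g) : θ z 0 = 0 := by simpa using hright 1 z 0 0
  let ω : LinearMap.BilinForm K g := LinearMap.mk₂ K θ
    (fun x y z ↦ by simpa using hleft 1 x y z)
    (fun a x z ↦ by simpa [hzero_left] using hleft a x 0 z)
    (fun x y z ↦ by simpa using hright 1 x y z)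
    (fun a x z ↦ by simpa [hzero_right] using hright a x z 0)
  have hω : ω.IsAlt := halt
  exact ⟨ω, hω, hω.isRefl.nondegenerate_iff_separatingLeft.mpr hnondeg, hclosed⟩

end Symplectic

theorem finrank_range_ad_le_of_hasCharSeqTwos {K g : Type*} [RCLike K] [LieRing g]
    [LieAlgebra K g] (hnil : ∀ x y z : g, ⁅⁅x, y⁆, z⁆ = 0) {k : ℕ} (hk : HasCharSeqTwos K g k)
    (x : g) : finrank K (ad K g x).range ≤ k := by
  by_cases hx : x ∈ derivedSeries K g 1
  · have hker : (derivedSeries K g 1).toSubmodule ≤ LinearMap.ker (ad K g : g →ₗ[K] End K g) :=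
      derivedSeries_one_le_iff.mpr fun y z ↦ LinearMap.ext (hnil y z)
    have had : ad K g x = 0 := hker hx
    rw [had, LinearMap.range_zero, finrank_bot]
    exact k.zero_le
  · exact hk.1 x hx

theorem decomposable_of_eightDim_charSeq24_symplectic_general {K L : Type*} [Field K] [Infinite K]
    [LieRing L] [LieAlgebra K L] [FiniteDimensional K L] (hdim : 8 ≤ finrank K L)
    (hrank : ∀ x : L, finrank K (ad K L x).range ≤ 2) {ω : LinearMap.BilinForm K L}
    (hω : IsSymplecticBilinForm_s14 ω) :
    ∃ I J : LieIdeal K L, I ≠ ⊥ ∧ J ≠ ⊥ ∧ I ⊓ J = ⊥ ∧ I ⊔ J = ⊤ :=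
  exists_isCompl_lieIdeal_of_not_center_le (by omega)
    (hω.not_center_le_derivedSeries_one hdim hrank)

/-- Every 8-dimensional 2-step nilpotent symplectic Lie algebra over `K` with characteristic
sequence `(2,2,1,1,1,1)` is decomposable: it is the direct sum of two nonzero ideals. -/
theorem decomposable_of_eightDim_charSeq24_symplectic
    (K : Type*) [RCLike K] (g : Type*) [LieRing g] [LieAlgebra K g] [FiniteDimensional K g]
    (h2 : IsTwoStepNilpotent g) (h8 : Module.finrank K g = 8)
    (hc : HasCharSeqTwos K g 2)
    (θ : g → g → K) (hθ : IsSymplecticForm K g θ) :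
    ∃ I J : LieIdeal K g, I ≠ ⊥ ∧ J ≠ ⊥ ∧ I ⊓ J = ⊥ ∧ I ⊔ J = ⊤ := by
  obtain ⟨ω, hω⟩ := hθ.exists_isSymplecticBilinForm
  exact decomposable_of_eightDim_charSeq24_symplectic_general h8.ge
    (finrank_range_ad_le_of_hasCharSeqTwos h2.1 hc) hω
end
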